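/- arXiv:2203.01258 — 2 statements merged into one kernel-verified Lean document; each statement's English description precedes it below -/
import Mathlib

section
/- Let A be a standard-graded Artinian Gorenstein algebra with linear form ℓ. Then the pair (A, ℓ) is strong Lefschetz (i.e., the maps ℓ^{j-2i}: A_i → A_{j-i} are bijective for all 0 ≤ i ≤ ⌊j/2⌋, where j is the socle degree) if and only if the Jordan type partition P_{A,ℓ} of the nilpotent multiplication map ℓ: A → A equals the conjugate partition of the Hilbert function T(A) reordered as a partition. -/
/- Common background: standard graded Artinian (Gorenstein) quotients of a
polynomial ring, their graded pieces, Hilbert function, socle degree,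
Lefschetz-type conditions, and Macaulay contraction duality. -/

noncomputable section
open MvPolynomial
open scoped Classical

variable {K : Type*} [Field K] {n : ℕ}

/-- The degree-`i` graded component of `R/I`: the image in the quotient of the
homogeneous polynomials of degree `i`. -/
def gradedPiece (I : Ideal (MvPolynomial (Fin n) K)) (i : ℕ) :
    Submodule K (MvPolynomial (Fin n) K ⧸ I) :=
  (homogeneousSubmodule (Fin n) K i).map (Ideal.Quotient.mkₐ K I).toLinearMap

/-- The Hilbert function of `R/I`. -/
def hilbFn (I : Ideal (MvPolynomial (Fin n) K)) (i : ℕ) : ℕ :=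
  Module.finrank K (gradedPiece I i)

/-- `I` is a homogeneous ideal. -/
def IsHomogIdeal (I : Ideal (MvPolynomial (Fin n) K)) : Prop :=
  ∀ p ∈ I, ∀ i, homogeneousComponent i p ∈ I

/-- The socle of `R/I`: elements killed by every variable. -/
def socleSub (I : Ideal (MvPolynomial (Fin n) K)) :
    Submodule K (MvPolynomial (Fin n) K ⧸ I) :=
  ⨅ v : Fin n, LinearMap.ker (LinearMap.mulLeft K (Ideal.Quotient.mk I (X v)))

/-- `R/I` is a standard graded Artinian Gorenstein algebra. -/
def IsAG (I : Ideal (MvPolynomial (Fin n) K)) : Prop :=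
  IsHomogIdeal I ∧ I ≠ ⊤ ∧ FiniteDimensional K (MvPolynomial (Fin n) K ⧸ I) ∧
    Module.finrank K (socleSub I) = 1

/-- The socle degree: the top degree with nonzero component. -/
def socDeg (I : Ideal (MvPolynomial (Fin n) K)) : ℕ :=
  sSup {i | hilbFn I i ≠ 0}

/-- Multiplication by `ℓ ^ d` maps `A_u` bijectively onto `A_v`. -/
def PowMulBij (I : Ideal (MvPolynomial (Fin n) K)) (ℓ : MvPolynomial (Fin n) K ⧸ I)
    (d u v : ℕ) : Prop :=
  (∀ a ∈ gradedPiece I u, ℓ ^ d * a = 0 → a = 0) ∧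
  (∀ b ∈ gradedPiece I v, ∃ a ∈ gradedPiece I u, ℓ ^ d * a = b)

/-- `(A, ℓ)` is a strong Lefschetz pair: `ℓ^(j-2i) : A_i → A_(j-i)` is bijective
for all `0 ≤ i ≤ ⌊j/2⌋`, `j` the socle degree. -/
def SLPair (I : Ideal (MvPolynomial (Fin n) K)) (ℓ : MvPolynomial (Fin n) K ⧸ I) : Prop :=
  ∀ i, 2 * i ≤ socDeg I → PowMulBij I ℓ (socDeg I - 2 * i) i (socDeg I - i)

/-- `A = R/I` has the strong Lefschetz property. -/
def StrongLefschetz (I : Ideal (MvPolynomial (Fin n) K)) : Prop :=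
  ∃ ℓ ∈ gradedPiece I 1, SLPair I ℓ

/-- Contraction of `F` by the monomial `x^d`. -/
def contractMon (d : Fin n →₀ ℕ) (F : MvPolynomial (Fin n) K) : MvPolynomial (Fin n) K :=
  ∑ e ∈ F.support, if d ≤ e then monomial (e - d) (coeff e F) else 0

/-- Contraction action of a polynomial `p` on `F` (Macaulay duality pairing). -/
def contract (p F : MvPolynomial (Fin n) K) : MvPolynomial (Fin n) K :=
  ∑ d ∈ p.support, coeff d p • contractMon d F

/-- `P` is the Jordan type of multiplication by `ℓ` on `A = R/I`: the multiset of
Jordan block sizes, characterized by `dim ker(ℓ^m) = Σ_i min(P_i, m)` for all `m`. -/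
def IsJordanTypeOf (I : Ideal (MvPolynomial (Fin n) K)) (ℓ : MvPolynomial (Fin n) K ⧸ I)
    (P : Multiset ℕ) : Prop :=
  (0 ∉ P) ∧ P.sum = Module.finrank K (MvPolynomial (Fin n) K ⧸ I) ∧
  ∀ m : ℕ, Module.finrank K (LinearMap.ker ((LinearMap.mulLeft K ℓ) ^ m)) =
    (P.map fun t => min t m).sum

/-- The conjugate of a multiset of natural numbers (viewed as a partition):
the `i`-th part of the conjugate counts the parts of `M` that are `≥ i`. -/
def conjMultiset (M : Multiset ℕ) : Multiset ℕ :=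
  (Multiset.range M.sup).map fun i => M.countP fun t => i < t

/-- The Hilbert function of `A = R/I` collected as a multiset (its reordering
as a partition being immaterial for multiset equality). -/
def hilbMultiset (I : Ideal (MvPolynomial (Fin n) K)) : Multiset ℕ :=
  (Multiset.range (socDeg I + 1)).map (hilbFn I)

/-- A finite set of naturals with at most one right end is an interval. -/
lemma Finset.ordConnected_of_card_right_ends_le_one (S : Finset ℕ)
    (h : (S.filter fun i => i + 1 ∉ S).card ≤ 1) {a b c : ℕ} (ha : a ∈ S) (hc : c ∈ S)
    (hab : a ≤ b) (hbc : b ≤ c) : b ∈ S := by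
  by_contra hb
  have hne : (S.filter (· < b)).Nonempty :=
    ⟨a, Finset.mem_filter.2 ⟨ha, lt_of_le_of_ne hab (by rintro rfl; exact hb ha)⟩⟩
  obtain ⟨x, hx, hxmax⟩ := Finset.exists_max_image _ id hne
  obtain ⟨y, hy, hymax⟩ := Finset.exists_max_image S id ⟨c, hc⟩
  simp only [Finset.mem_filter, id] at hx hxmax hymax
  have hx1 : x + 1 ∉ S := by
    intro hmem
    by_cases hlt : x + 1 < b
    · have := hxmax _ ⟨hmem, hlt⟩
      omega
    · have : x + 1 = b := by omega
      exact hb (this ▸ hmem)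
  have hy1 : y + 1 ∉ S := fun hmem => by
    have := hymax _ hmem
    omega
  have hxy := Finset.card_le_one.1 h x (Finset.mem_filter.2 ⟨hx.1, hx1⟩) y
    (Finset.mem_filter.2 ⟨hy, hy1⟩)
  have := hymax _ hc
  omega

lemma Finset.min_card_one_le_card_right_ends (S : Finset ℕ) :
    min S.card 1 ≤ (S.filter fun i => i + 1 ∉ S).card := by
  rcases S.eq_empty_or_nonempty with rfl | hS
  · simp
  · obtain ⟨y, hy, hymax⟩ := Finset.exists_max_image S id hS
    refine (min_le_right _ _).trans (Finset.card_pos.2 ⟨y, Finset.mem_filter.2 ⟨hy, fun hmem => ?_⟩⟩)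
    have := hymax _ hmem
    simp only [id] at this
    omega

/-- The number of elements of an interval that leave it after a shift by `m`. -/
lemma Finset.card_filter_add_notMem_of_interval (S : Finset ℕ)
    (h : ∀ a ∈ S, ∀ c ∈ S, ∀ b, a ≤ b → b ≤ c → b ∈ S) (m : ℕ) :
    (S.filter fun i => i + m ∉ S).card = min S.card m := by
  rcases S.eq_empty_or_nonempty with rfl | hS
  · simp
  · obtain ⟨u, v, hu, huv⟩ : ∃ u v, u ≤ v ∧ S = Finset.Icc u v := by
      refine ⟨S.min' hS, S.max' hS, S.min'_le_max' hS, ?_⟩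
      ext x
      rw [Finset.mem_Icc]
      exact ⟨fun hx => ⟨S.min'_le x hx, S.le_max' x hx⟩,
        fun hx => h _ (S.min'_mem hS) _ (S.max'_mem hS) x hx.1 hx.2⟩
    subst huv
    have : ((Finset.Icc u v).filter fun i => i + m ∉ Finset.Icc u v) =
        Finset.Icc (max u (v + 1 - m)) v := by
      ext x
      simp only [Finset.mem_filter, Finset.mem_Icc]
      omega
    rw [this, Nat.card_Icc, Nat.card_Icc]
    omega

/-- Layer-cake summation of the drops `H i - H (i + m)`. -/
lemma sum_sub_min_eq_sum_card (H : ℕ → ℕ) (j : ℕ) (hH : ∀ k, j < k → H k = 0) (m : ℕ) :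
    ∑ i ∈ Finset.range (j + 1), (H i - min (H i) (H (i + m))) =
      ∑ t ∈ Finset.range ((Finset.range (j + 1)).sup H),
        (((Finset.range (j + 1)).filter fun i => t < H i).filter fun i =>
          i + m ∉ (Finset.range (j + 1)).filter fun i => t < H i).card := by
  simp_rw [Finset.filter_filter, Finset.card_filter]
  rw [Finset.sum_comm]
  refine Finset.sum_congr rfl fun i hi => ?_
  rw [← Finset.card_filter]
  have hle : H i ≤ (Finset.range (j + 1)).sup H := Finset.le_sup hi
  have : (Finset.range ((Finset.range (j + 1)).sup H)).filter (fun t =>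
      t < H i ∧ i + m ∉ (Finset.range (j + 1)).filter fun i => t < H i) =
        Finset.Ico (H (i + m)) (H i) := by
    ext t
    have := hH (i + m)
    simp only [Finset.mem_filter, Finset.mem_range, Finset.mem_Ico]
    by_cases hj : i + m < j + 1
    · omega
    · have := this (by omega)
      omega
  rw [this, Nat.card_Ico]
  omega

/-- Shift ranks `r i m` on a graded space with Hilbert function `H` are as large as possible
if and only if the resulting nullities are those of the conjugate partition of `H`. -/
lemma min_le_rank_iff_sum_eq (H : ℕ → ℕ) (j : ℕ) (hH : ∀ k, j < k → H k = 0)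
    (r : ℕ → ℕ → ℕ) (hr : ∀ i m k, i ≤ k → k ≤ i + m → r i m ≤ H k) :
    (∀ i m, min (H i) (H (i + m)) ≤ r i m) ↔
      ∀ m, ∑ i ∈ Finset.range (j + 1), (H i - r i m) =
        ∑ t ∈ Finset.range ((Finset.range (j + 1)).sup H),
          min ((Finset.range (j + 1)).filter fun i => t < H i).card m := by
  have hrmin : ∀ i m, r i m ≤ min (H i) (H (i + m)) := fun i m =>
    le_min (hr i m i le_rfl (by omega)) (hr i m (i + m) (by omega) le_rfl)
  constructor
  · intro h m
    have heq : ∀ i m, r i m = min (H i) (H (i + m)) := fun i m => (hrmin i m).antisymm (h i m)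
    simp_rw [heq]
    rw [sum_sub_min_eq_sum_card H j hH]
    refine Finset.sum_congr rfl fun t _ => Finset.card_filter_add_notMem_of_interval _ ?_ m
    intro a ha c hc b hab hbc
    simp only [Finset.mem_filter, Finset.mem_range] at ha hc ⊢
    have h1 := h a (c - a)
    have h2 := hr a (c - a) b hab (by omega)
    rw [show a + (c - a) = c by omega] at h1
    omega
  · intro h
    set S : ℕ → Finset ℕ := fun t => (Finset.range (j + 1)).filter fun i => t < H i with hS
    have hint : ∀ t ∈ Finset.range ((Finset.range (j + 1)).sup H),
        ∀ a ∈ S t, ∀ c ∈ S t, ∀ b, a ≤ b → b ≤ c → b ∈ S t := by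
      have hle : ∑ t ∈ Finset.range ((Finset.range (j + 1)).sup H),
          ((S t).filter fun i => i + 1 ∉ S t).card ≤
          ∑ t ∈ Finset.range ((Finset.range (j + 1)).sup H), min (S t).card 1 := by
        rw [← h 1, ← sum_sub_min_eq_sum_card H j hH 1]
        exact Finset.sum_le_sum fun i _ => Nat.sub_le_sub_left (hrmin i 1) _
      have heq := (Finset.sum_eq_sum_iff_of_le fun t _ =>
        (S t).min_card_one_le_card_right_ends).1 (le_antisymm
          (Finset.sum_le_sum fun t _ => (S t).min_card_one_le_card_right_ends) hle)
      intro t ht a ha c hc b hab hbc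
      exact (S t).ordConnected_of_card_right_ends_le_one
        ((heq t ht).symm.le.trans (min_le_right _ _)) ha hc hab hbc
    intro i m
    by_cases hi : i ∈ Finset.range (j + 1)
    · have hsum : ∑ i ∈ Finset.range (j + 1), (H i - min (H i) (H (i + m))) =
          ∑ i ∈ Finset.range (j + 1), (H i - r i m) := by
        rw [h m, sum_sub_min_eq_sum_card H j hH]
        exact Finset.sum_congr rfl fun t ht =>
          Finset.card_filter_add_notMem_of_interval (S t) (hint t ht) m
      have := (Finset.sum_eq_sum_iff_of_le fun i _ =>
        Nat.sub_le_sub_left (hrmin i m) (H i)).1 hsum i hi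
      have := hrmin i m
      omega
    · rw [hH i (by simpa using hi)]
      simp

lemma conjMultiset_hilbMultiset (I : Ideal (MvPolynomial (Fin n) K)) :
    conjMultiset (hilbMultiset I) =
      (Finset.range ((Finset.range (socDeg I + 1)).sup (hilbFn I))).val.map fun t =>
        ((Finset.range (socDeg I + 1)).filter fun i => t < hilbFn I i).card := by
  unfold conjMultiset hilbMultiset
  refine Multiset.map_congr rfl fun t _ => ?_
  rw [Multiset.countP_map]
  rfl

lemma zero_notMem_conjMultiset_hilbMultiset (I : Ideal (MvPolynomial (Fin n) K)) :
    0 ∉ conjMultiset (hilbMultiset I) := by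
  rw [conjMultiset_hilbMultiset]
  intro h
  obtain ⟨t, ht, h0⟩ := Multiset.mem_map.1 h
  obtain ⟨i, hi, hti⟩ := Finset.lt_sup_iff.1 (Finset.mem_range.1 ht)
  exact (Finset.card_pos.2 ⟨i, Finset.mem_filter.2 ⟨hi, hti⟩⟩).ne' h0

lemma sum_conjMultiset_hilbMultiset (I : Ideal (MvPolynomial (Fin n) K)) :
    (conjMultiset (hilbMultiset I)).sum = ∑ i ∈ Finset.range (socDeg I + 1), hilbFn I i := by
  rw [conjMultiset_hilbMultiset]
  change ∑ t ∈ Finset.range ((Finset.range (socDeg I + 1)).sup (hilbFn I)),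
    ((Finset.range (socDeg I + 1)).filter fun i => t < hilbFn I i).card = _
  simp_rw [Finset.card_filter]
  rw [Finset.sum_comm]
  refine Finset.sum_congr rfl fun i hi => ?_
  rw [← Finset.card_filter]
  have hle : hilbFn I i ≤ (Finset.range (socDeg I + 1)).sup (hilbFn I) := Finset.le_sup hi
  have : (Finset.range ((Finset.range (socDeg I + 1)).sup (hilbFn I))).filter
      (fun t => t < hilbFn I i) = Finset.range (hilbFn I i) := by
    ext t
    simp only [Finset.mem_filter, Finset.mem_range]
    omega
  rw [this, Finset.card_range]

section Graded

variable {I : Ideal (MvPolynomial (Fin n) K)}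

lemma mem_gradedPiece {i : ℕ} {a : MvPolynomial (Fin n) K ⧸ I} :
    a ∈ gradedPiece I i ↔ ∃ p, p.IsHomogeneous i ∧ Ideal.Quotient.mk I p = a := by
  simp [gradedPiece, Submodule.mem_map, mem_homogeneousSubmodule]

lemma mul_mem_gradedPiece {i k : ℕ} {a b : MvPolynomial (Fin n) K ⧸ I}
    (ha : a ∈ gradedPiece I i) (hb : b ∈ gradedPiece I k) : a * b ∈ gradedPiece I (i + k) := by
  obtain ⟨p, hp, rfl⟩ := mem_gradedPiece.1 ha
  obtain ⟨q, hq, rfl⟩ := mem_gradedPiece.1 hb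
  exact mem_gradedPiece.2 ⟨p * q, hp.mul hq, map_mul _ _ _⟩

lemma pow_mul_mem_gradedPiece {i : ℕ} {ℓ a : MvPolynomial (Fin n) K ⧸ I}
    (hℓ : ℓ ∈ gradedPiece I 1) (ha : a ∈ gradedPiece I i) (m : ℕ) :
    ℓ ^ m * a ∈ gradedPiece I (i + m) := by
  obtain ⟨p, hp, rfl⟩ := mem_gradedPiece.1 hℓ
  rw [add_comm]
  refine mul_mem_gradedPiece (mem_gradedPiece.2 ⟨p ^ m, ?_, map_pow _ _ _⟩) ha
  simpa using hp.pow m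

/-- The projection of `R/I` onto its degree-`i` component, for homogeneous `I`. -/
lemma exists_gradedProj (hI : IsHomogIdeal I) (i : ℕ) :
    ∃ π : (MvPolynomial (Fin n) K ⧸ I) →ₗ[K] (MvPolynomial (Fin n) K ⧸ I),
      ∀ p, π (Ideal.Quotient.mk I p) = Ideal.Quotient.mk I (homogeneousComponent i p) := by
  obtain ⟨g, hg⟩ := (Ideal.Quotient.mkₐ K I).toLinearMap.exists_rightInverse_of_surjective
    (LinearMap.range_eq_top.2 (Ideal.Quotient.mkₐ_surjective K I))
  refine ⟨(Ideal.Quotient.mkₐ K I).toLinearMap ∘ₗ homogeneousComponent i ∘ₗ g, fun p => ?_⟩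
  have h := LinearMap.congr_fun hg (Ideal.Quotient.mk I p)
  change Ideal.Quotient.mk I (g (Ideal.Quotient.mk I p)) = Ideal.Quotient.mk I p at h
  change Ideal.Quotient.mk I (homogeneousComponent i (g (Ideal.Quotient.mk I p))) = _
  rw [Ideal.Quotient.eq] at h ⊢
  rw [← map_sub]
  exact hI _ h i

/-- The projection of `R/I` onto its degree-`i` component, for homogeneous `I`. -/
def gradedProj (hI : IsHomogIdeal I) (i : ℕ) :
    (MvPolynomial (Fin n) K ⧸ I) →ₗ[K] (MvPolynomial (Fin n) K ⧸ I) :=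
  (exists_gradedProj hI i).choose

variable (hI : IsHomogIdeal I)

lemma gradedProj_mk (i : ℕ) (p : MvPolynomial (Fin n) K) :
    gradedProj hI i (Ideal.Quotient.mk I p) = Ideal.Quotient.mk I (homogeneousComponent i p) :=
  (exists_gradedProj hI i).choose_spec p

lemma gradedProj_mem (i : ℕ) (a : MvPolynomial (Fin n) K ⧸ I) :
    gradedProj hI i a ∈ gradedPiece I i := by
  obtain ⟨p, rfl⟩ := Ideal.Quotient.mk_surjective a
  rw [gradedProj_mk]
  exact mem_gradedPiece.2 ⟨_, homogeneousComponent_isHomogeneous i p, rfl⟩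

lemma gradedProj_of_mem {i k : ℕ} {a : MvPolynomial (Fin n) K ⧸ I} (ha : a ∈ gradedPiece I k) :
    gradedProj hI i a = if i = k then a else 0 := by
  obtain ⟨p, hp, rfl⟩ := mem_gradedPiece.1 ha
  rw [gradedProj_mk, homogeneousComponent_of_mem hp]
  by_cases h : i = k <;> simp [h]

include hI in
lemma eq_zero_of_mem_gradedPiece_of_ne {i k : ℕ} {a : MvPolynomial (Fin n) K ⧸ I} (hik : i ≠ k)
    (hi : a ∈ gradedPiece I i) (hk : a ∈ gradedPiece I k) : a = 0 := by
  have h1 := gradedProj_of_mem hI (i := i) hi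
  rw [gradedProj_of_mem hI hk, if_neg hik, if_pos rfl] at h1
  exact h1.symm

variable [FiniteDimensional K (MvPolynomial (Fin n) K ⧸ I)]

include hI in
lemma bddAbove_setOf_hilbFn_ne_zero : BddAbove {i | hilbFn I i ≠ 0} := by
  have hind : iSupIndep (gradedPiece I) := by
    rw [iSupIndep_def]
    intro i
    rw [Submodule.disjoint_def]
    intro a ha hb
    have h0 : (⨆ k, ⨆ (_ : k ≠ i), gradedPiece I k) ≤ LinearMap.ker (gradedProj hI i) := by
      refine iSup₂_le fun k hk b hb => ?_
      rw [LinearMap.mem_ker, gradedProj_of_mem hI hb, if_neg hk.symm]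
    have := LinearMap.mem_ker.1 (h0 hb)
    rwa [gradedProj_of_mem hI ha, if_pos rfl] at this
  refine ((WellFoundedGT.finite_ne_bot_of_iSupIndep hind).subset ?_).bddAbove
  intro i hi h
  exact hi (Submodule.finrank_eq_zero.2 h)

include hI in
lemma hilbFn_eq_zero_of_socDeg_lt {k : ℕ} (hk : socDeg I < k) : hilbFn I k = 0 := by
  by_contra h
  exact hk.not_ge (le_csSup (bddAbove_setOf_hilbFn_ne_zero hI) h)

include hI in
lemma gradedPiece_eq_bot_of_socDeg_lt {k : ℕ} (hk : socDeg I < k) : gradedPiece I k = ⊥ :=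
  Submodule.finrank_eq_zero.1 (hilbFn_eq_zero_of_socDeg_lt hI hk)

lemma sum_gradedProj (a : MvPolynomial (Fin n) K ⧸ I) :
    ∑ i ∈ Finset.range (socDeg I + 1), gradedProj hI i a = a := by
  obtain ⟨p, rfl⟩ := Ideal.Quotient.mk_surjective a
  have hz : ∀ i, socDeg I < i → gradedProj hI i (Ideal.Quotient.mk I p) = 0 := fun i hi => by
    have := gradedProj_mem hI i (Ideal.Quotient.mk I p)
    rwa [gradedPiece_eq_bot_of_socDeg_lt hI hi, Submodule.mem_bot] at this
  have h1 : ∑ i ∈ Finset.range (p.totalDegree + 1), gradedProj hI i (Ideal.Quotient.mk I p) =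
      Ideal.Quotient.mk I p := by
    simp_rw [gradedProj_mk]
    rw [← map_sum, sum_homogeneousComponent]
  have hz' : ∀ i, p.totalDegree < i → gradedProj hI i (Ideal.Quotient.mk I p) = 0 := fun i hi => by
    rw [gradedProj_mk, homogeneousComponent_eq_zero _ _ hi, map_zero]
  refine Eq.trans ?_ h1
  rcases le_total (socDeg I) p.totalDegree with h | h
  · refine Finset.sum_subset (Finset.range_mono (by omega)) fun i _ hi => hz i ?_
    simpa using hi
  · refine (Finset.sum_subset (Finset.range_mono (by omega)) fun i _ hi => hz' i ?_).symm
    simpa using hi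

/-- The dimension of a graded subspace is the sum of the dimensions of its components. -/
lemma finrank_eq_sum_finrank_inf_gradedPiece (W : Submodule K (MvPolynomial (Fin n) K ⧸ I))
    (hW : ∀ w ∈ W, ∀ i, gradedProj hI i w ∈ W) :
    Module.finrank K W =
      ∑ i ∈ Finset.range (socDeg I + 1), Module.finrank K ↥(W ⊓ gradedPiece I i) := by
  let e : W ≃ₗ[K] ((i : Fin (socDeg I + 1)) → ↥(W ⊓ gradedPiece I (i : ℕ))) :=
    { toFun := fun w i => ⟨gradedProj hI i w, hW w w.2 i, gradedProj_mem hI i w⟩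
      map_add' := fun _ _ => funext fun _ => Subtype.ext (map_add _ _ _)
      map_smul' := fun _ _ => funext fun _ => Subtype.ext (map_smul _ _ _)
      invFun := fun f => ⟨∑ i, (f i).1, W.sum_mem fun i _ => (f i).2.1⟩
      left_inv := fun w => Subtype.ext <| by
        change ∑ i : Fin (socDeg I + 1), gradedProj hI i w.1 = w.1
        rw [Fin.sum_univ_eq_sum_range (fun i => gradedProj hI i w.1)]
        exact sum_gradedProj hI _
      right_inv := fun f => funext fun i => Subtype.ext <| by
        change gradedProj hI i (∑ k, (f k).1) = (f i).1
        rw [map_sum, Finset.sum_eq_single i]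
        · rw [gradedProj_of_mem hI (f i).2.2, if_pos rfl]
        · intro k _ hk
          rw [gradedProj_of_mem hI (f k).2.2, if_neg fun h => hk (Fin.ext h.symm)]
        · simp }
  rw [e.finrank_eq, Module.finrank_pi_fintype,
    Fin.sum_univ_eq_sum_range (fun i => Module.finrank K ↥(W ⊓ gradedPiece I i))]

include hI in
lemma finrank_quotient_eq_sum_hilbFn :
    Module.finrank K (MvPolynomial (Fin n) K ⧸ I) =
      ∑ i ∈ Finset.range (socDeg I + 1), hilbFn I i := by
  rw [← finrank_top, finrank_eq_sum_finrank_inf_gradedPiece hI ⊤ (by simp)]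
  exact Finset.sum_congr rfl fun i _ => by rw [top_inf_eq, hilbFn]

omit [FiniteDimensional K (MvPolynomial (Fin n) K ⧸ I)] in
lemma mem_ker_pow_mulLeft {ℓ a : MvPolynomial (Fin n) K ⧸ I} {m : ℕ} :
    a ∈ LinearMap.ker (LinearMap.mulLeft K ℓ ^ m) ↔ ℓ ^ m * a = 0 := by
  have h : LinearMap.mulLeft K ℓ ^ m = LinearMap.mulLeft K (ℓ ^ m) := LinearMap.pow_mulLeft K _ ℓ m
  rw [h]
  exact LinearMap.mem_ker

/-- The rank of multiplication by `ℓ ^ m` on the degree-`i` component. -/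
def powRank (ℓ : MvPolynomial (Fin n) K ⧸ I) (i m : ℕ) : ℕ :=
  Module.finrank K ((gradedPiece I i).map (LinearMap.mulLeft K (ℓ ^ m)))

lemma finrank_ker_inf_gradedPiece (ℓ : MvPolynomial (Fin n) K ⧸ I) (i m : ℕ) :
    Module.finrank K ↥(LinearMap.ker (LinearMap.mulLeft K ℓ ^ m) ⊓ gradedPiece I i) =
      hilbFn I i - powRank ℓ i m := by
  have h :=
    ((LinearMap.mulLeft K (ℓ ^ m)).domRestrict (gradedPiece I i)).finrank_range_add_finrank_ker
  rw [LinearMap.range_domRestrict] at h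
  have hker : LinearMap.ker ((LinearMap.mulLeft K (ℓ ^ m)).domRestrict (gradedPiece I i)) =
      (LinearMap.ker (LinearMap.mulLeft K ℓ ^ m)).comap (gradedPiece I i).subtype :=
    Submodule.ext fun a => mem_ker_pow_mulLeft.symm
  have h2 := LinearMap.finrank_range_of_inj (f := (gradedPiece I i).subtype.domRestrict
    ((LinearMap.ker (LinearMap.mulLeft K ℓ ^ m)).comap (gradedPiece I i).subtype))
    (Subtype.val_injective.comp Subtype.val_injective)
  rw [LinearMap.range_domRestrict, Submodule.map_comap_subtype, inf_comm] at h2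
  rw [hker, ← h2] at h
  unfold hilbFn powRank
  omega

include hI in
lemma finrank_ker_pow_mulLeft {ℓ : MvPolynomial (Fin n) K ⧸ I} (hℓ : ℓ ∈ gradedPiece I 1)
    (m : ℕ) :
    Module.finrank K (LinearMap.ker (LinearMap.mulLeft K ℓ ^ m)) =
      ∑ i ∈ Finset.range (socDeg I + 1), (hilbFn I i - powRank ℓ i m) := by
  rw [finrank_eq_sum_finrank_inf_gradedPiece hI]
  · exact Finset.sum_congr rfl fun i _ => finrank_ker_inf_gradedPiece ℓ i m
  · intro w hw i
    rw [mem_ker_pow_mulLeft] at hw ⊢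
    have h := congrArg (gradedProj hI (i + m)) hw
    rw [← sum_gradedProj hI w, Finset.mul_sum, map_sum, map_zero] at h
    by_cases hi : i ∈ Finset.range (socDeg I + 1)
    · rw [Finset.sum_eq_single_of_mem i hi] at h
      · rwa [gradedProj_of_mem hI (pow_mul_mem_gradedPiece hℓ (gradedProj_mem hI i w) m),
          if_pos rfl] at h
      · intro k _ hk
        rw [gradedProj_of_mem hI (pow_mul_mem_gradedPiece hℓ (gradedProj_mem hI k w) m),
          if_neg (by omega)]
    · have := gradedProj_mem hI i w
      rw [gradedPiece_eq_bot_of_socDeg_lt hI (by simpa using hi), Submodule.mem_bot] at this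
      rw [this, mul_zero]

lemma powRank_le_hilbFn {ℓ : MvPolynomial (Fin n) K ⧸ I} (hℓ : ℓ ∈ gradedPiece I 1)
    {i m k : ℕ} (hik : i ≤ k) (hkm : k ≤ i + m) : powRank ℓ i m ≤ hilbFn I k := by
  have hle : (gradedPiece I i).map (LinearMap.mulLeft K (ℓ ^ m)) ≤
      (gradedPiece I k).map (LinearMap.mulLeft K (ℓ ^ (i + m - k))) := by
    rintro _ ⟨a, ha, rfl⟩
    refine ⟨ℓ ^ (k - i) * a, ?_, ?_⟩
    · have := pow_mul_mem_gradedPiece hℓ ha (k - i)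
      rwa [Nat.add_sub_cancel' hik] at this
    · simp only [LinearMap.mulLeft_apply]
      rw [← mul_assoc, ← pow_add]
      congr 2
      omega
  exact (Submodule.finrank_mono hle).trans (Submodule.finrank_map_le _ _)

include hI in
lemma isJordanTypeOf_iff {ℓ : MvPolynomial (Fin n) K ⧸ I}
    (hℓ : ℓ ∈ gradedPiece I 1) :
    IsJordanTypeOf I ℓ (conjMultiset (hilbMultiset I)) ↔
      ∀ i m, min (hilbFn I i) (hilbFn I (i + m)) ≤ powRank ℓ i m := by
  rw [min_le_rank_iff_sum_eq (hilbFn I) (socDeg I) (fun k => hilbFn_eq_zero_of_socDeg_lt hI)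
    (powRank ℓ) fun i m k => powRank_le_hilbFn hℓ]
  unfold IsJordanTypeOf
  rw [sum_conjMultiset_hilbMultiset, finrank_quotient_eq_sum_hilbFn hI]
  simp_rw [finrank_ker_pow_mulLeft hI hℓ]
  rw [and_iff_right (zero_notMem_conjMultiset_hilbMultiset I), and_iff_right trivial]
  refine forall_congr' fun m => ?_
  rw [conjMultiset_hilbMultiset, Multiset.map_map]
  rfl

include hI in
lemma min_le_powRank_of_SLPair {ℓ : MvPolynomial (Fin n) K ⧸ I}
    (hℓ : ℓ ∈ gradedPiece I 1) (h : SLPair I ℓ) (i m : ℕ) :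
    min (hilbFn I i) (hilbFn I (i + m)) ≤ powRank ℓ i m := by
  by_cases hj : socDeg I < i + m
  · rw [hilbFn_eq_zero_of_socDeg_lt hI hj]
    simp
  rcases le_total (2 * i + m) (socDeg I) with hm | hm
  · refine (min_le_left _ _).trans (le_of_eq ?_)
    have hinj : ∀ a ∈ gradedPiece I i, ℓ ^ m * a = 0 → a = 0 := fun a ha h0 => by
      refine (h i (by omega)).1 a ha ?_
      rw [show socDeg I - 2 * i = (socDeg I - 2 * i - m) + m by omega, pow_add, mul_assoc, h0,
        mul_zero]
    have hd : LinearMap.ker ((LinearMap.mulLeft K (ℓ ^ m)).domRestrict (gradedPiece I i)) = ⊥ :=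
      LinearMap.ker_eq_bot'.2 fun a ha => Subtype.ext (hinj a a.2 ha)
    have := LinearMap.finrank_range_of_inj (LinearMap.ker_eq_bot.1 hd)
    rw [LinearMap.range_domRestrict] at this
    exact this.symm
  · refine (min_le_right _ _).trans (Submodule.finrank_mono fun b hb => ?_)
    have hs := (h (socDeg I - (i + m)) (by omega)).2 b
    rw [Nat.sub_sub_self (by omega)] at hs
    obtain ⟨a, ha, rfl⟩ := hs hb
    refine ⟨ℓ ^ (socDeg I - 2 * (socDeg I - (i + m)) - m) * a, ?_, ?_⟩
    · have := pow_mul_mem_gradedPiece hℓ ha (socDeg I - 2 * (socDeg I - (i + m)) - m)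
      rwa [show socDeg I - (i + m) + (socDeg I - 2 * (socDeg I - (i + m)) - m) = i by omega]
        at this
    · rw [LinearMap.mulLeft_apply, ← mul_assoc, ← pow_add]
      congr 2
      omega

lemma SLPair_of_min_le_powRank {ℓ : MvPolynomial (Fin n) K ⧸ I}
    (hℓ : ℓ ∈ gradedPiece I 1)
    (hsymm : ∀ i ≤ socDeg I, hilbFn I i = hilbFn I (socDeg I - i))
    (h : ∀ i m, min (hilbFn I i) (hilbFn I (i + m)) ≤ powRank ℓ i m) : SLPair I ℓ := by
  intro i hi
  have hs := hsymm i (by omega)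
  have hr := h i (socDeg I - 2 * i)
  rw [show i + (socDeg I - 2 * i) = socDeg I - i by omega, ← hs, min_self] at hr
  have hrange : (gradedPiece I i).map (LinearMap.mulLeft K (ℓ ^ (socDeg I - 2 * i))) =
      gradedPiece I (socDeg I - i) := by
    refine Submodule.eq_of_le_of_finrank_le ?_ (hs.symm.le.trans hr)
    rintro _ ⟨a, ha, rfl⟩
    have := pow_mul_mem_gradedPiece hℓ ha (socDeg I - 2 * i)
    rwa [show i + (socDeg I - 2 * i) = socDeg I - i by omega] at this
  constructor
  · have hker := finrank_ker_inf_gradedPiece ℓ i (socDeg I - 2 * i)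
    rw [Nat.sub_eq_zero_of_le hr, Submodule.finrank_eq_zero] at hker
    intro a ha h0
    exact (Submodule.mem_bot K).1 (hker.le ⟨mem_ker_pow_mulLeft.2 h0, ha⟩)
  · intro b hb
    rw [← hrange] at hb
    exact hb

end Graded

section Gorenstein

variable {I : Ideal (MvPolynomial (Fin n) K)}

lemma X_mem_gradedPiece (v : Fin n) : Ideal.Quotient.mk I (X v) ∈ gradedPiece I 1 :=
  mem_gradedPiece.2 ⟨X v, isHomogeneous_X K v, rfl⟩

lemma mem_socleSub {a : MvPolynomial (Fin n) K ⧸ I} :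
    a ∈ socleSub I ↔ ∀ v, Ideal.Quotient.mk I (X v) * a = 0 := by
  simp [socleSub, Submodule.mem_iInf]

lemma hilbFn_socDeg_ne_zero (hAG : IsAG I) : hilbFn I (socDeg I) ≠ 0 := by
  obtain ⟨hI, htop, hfin, -⟩ := hAG
  refine Nat.sSup_mem (s := {i | hilbFn I i ≠ 0}) ⟨0, fun h => ?_⟩
    (bddAbove_setOf_hilbFn_ne_zero hI)
  have h1 : (1 : MvPolynomial (Fin n) K ⧸ I) ∈ gradedPiece I 0 :=
    mem_gradedPiece.2 ⟨1, isHomogeneous_one _ _, map_one _⟩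
  rw [Submodule.finrank_eq_zero.1 h, Submodule.mem_bot] at h1
  exact htop ((Ideal.eq_top_iff_one I).2 (Ideal.Quotient.eq_zero_iff_mem.1 h1))

lemma gradedPiece_socDeg (hAG : IsAG I) : gradedPiece I (socDeg I) = socleSub I := by
  have hne := hilbFn_socDeg_ne_zero hAG
  obtain ⟨hI, htop, hfin, hsoc⟩ := hAG
  refine Submodule.eq_of_le_of_finrank_le (fun a ha => mem_socleSub.2 fun v => ?_) ?_
  · have := mul_mem_gradedPiece (X_mem_gradedPiece v) ha
    rwa [gradedPiece_eq_bot_of_socDeg_lt hI (by omega), Submodule.mem_bot] at this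
  · rw [hsoc]
    exact Nat.one_le_iff_ne_zero.2 hne

/-- Multiplication into the socle is nondegenerate. -/
lemma exists_mul_ne_zero (hAG : IsAG I) (d : ℕ) : ∀ i, i + d = socDeg I →
    ∀ a ∈ gradedPiece I i, a ≠ 0 → ∃ b ∈ gradedPiece I d, a * b ≠ 0 := by
  induction d with
  | zero =>
    intro i _ a _ ha0
    exact ⟨1, mem_gradedPiece.2 ⟨1, isHomogeneous_one _ _, map_one _⟩, by simpa using ha0⟩
  | succ d ih =>
    intro i hi a ha ha0
    have hns : a ∉ socleSub I := fun hs => by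
      rw [← gradedPiece_socDeg hAG] at hs
      exact ha0 (eq_zero_of_mem_gradedPiece_of_ne hAG.1 (by omega) ha hs)
    rw [mem_socleSub] at hns
    push Not at hns
    obtain ⟨v, hv⟩ := hns
    obtain ⟨b, hb, hab⟩ := ih (1 + i) (by omega) _
      (mul_mem_gradedPiece (X_mem_gradedPiece v) ha) hv
    refine ⟨Ideal.Quotient.mk I (X v) * b, ?_, ?_⟩
    · rw [add_comm d 1]
      exact mul_mem_gradedPiece (X_mem_gradedPiece v) hb
    · rwa [← mul_assoc, mul_comm a]

lemma hilbFn_le_of_add_eq (hAG : IsAG I) {i k : ℕ} (hik : i + k = socDeg I) :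
    hilbFn I i ≤ hilbFn I k := by
  have hfin := hAG.2.2.1
  let f : gradedPiece I i →ₗ[K] (gradedPiece I k →ₗ[K] gradedPiece I (socDeg I)) :=
    LinearMap.mk₂ K (fun a b => ⟨a * b, hik ▸ mul_mem_gradedPiece a.2 b.2⟩)
      (fun _ _ _ => Subtype.ext (add_mul _ _ _)) (fun _ _ _ => Subtype.ext (smul_mul_assoc _ _ _))
      (fun _ _ _ => Subtype.ext (mul_add _ _ _)) (fun _ _ _ => Subtype.ext (mul_smul_comm _ _ _))
  have hf : Function.Injective f := by
    refine (injective_iff_map_eq_zero f).2 fun a ha => ?_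
    by_contra hne
    obtain ⟨b, hb, hab⟩ := exists_mul_ne_zero hAG k i hik a a.2 fun h => hne (Subtype.ext h)
    exact hab (congrArg Subtype.val (LinearMap.congr_fun ha ⟨b, hb⟩))
  have h := LinearMap.finrank_le_finrank_of_injective hf
  have h1 : Module.finrank K (gradedPiece I (socDeg I)) = 1 := by
    rw [gradedPiece_socDeg hAG]
    exact hAG.2.2.2
  rwa [Module.finrank_linearMap, h1, mul_one] at h

/-- The Hilbert function of an Artinian Gorenstein algebra is symmetric. -/
lemma hilbFn_symm (hAG : IsAG I) {i : ℕ} (hi : i ≤ socDeg I) :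
    hilbFn I i = hilbFn I (socDeg I - i) :=
  (hilbFn_le_of_add_eq hAG (by omega)).antisymm (hilbFn_le_of_add_eq hAG (by omega))

end Gorenstein

/-- for a standard graded Artinian Gorenstein algebra `A = R/I` and a
linear form `ℓ`, the pair `(A, ℓ)` is strong Lefschetz if and only if the Jordan type
of multiplication by `ℓ` on `A` is the conjugate of the Hilbert function of `A`. -/
theorem stmt0 (I : Ideal (MvPolynomial (Fin n) K)) (hAG : IsAG I)
    (ℓ : MvPolynomial (Fin n) K ⧸ I) (hℓ : ℓ ∈ gradedPiece I 1) :
    SLPair I ℓ ↔ IsJordanTypeOf I ℓ (conjMultiset (hilbMultiset I)) := by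
  have hfin := hAG.2.2.1
  rw [isJordanTypeOf_iff hAG.1 hℓ]
  exact ⟨min_le_powRank_of_SLPair hAG.1 hℓ,
    SLPair_of_min_le_powRank hℓ fun i => hilbFn_symm hAG⟩
end
end

section
/- A symmetric sequence T = (1, t_1, …, t_{j-1}, 1) with t_1 = 3 is the Hilbert function of some codimension three standard-graded Artinian Gorenstein algebra if and only if its first half difference sequence ΔT = (1, t_1 − 1, t_2 − t_1, …, t_{⌊j/2⌋} − t_{⌊j/2⌋−1}) is an O-sequence, i.e., T is an SI-sequence. -/
/- Common background: standard graded Artinian (Gorenstein) quotients of a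
polynomial ring, their graded pieces, Hilbert function, socle degree,
Lefschetz-type conditions, and Macaulay contraction duality. -/

noncomputable section
open MvPolynomial
open scoped Classical

variable {K : Type*} [Field K] {n : ℕ}

/-- An integer-valued sequence is an O-sequence (over `K`) if it is the Hilbert
function of some standard graded Artinian algebra (quotient of some polynomial ring
by a homogeneous ideal). -/
def IsOSequence (K : Type*) [Field K] (h : ℕ → ℤ) : Prop :=
  ∃ (m : ℕ) (I : Ideal (MvPolynomial (Fin m) K)), IsHomogIdeal I ∧
    FiniteDimensional K (MvPolynomial (Fin m) K ⧸ I) ∧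
    ∀ i, (hilbFn I i : ℤ) = h i

/-! ### Linear algebra -/

/-- Two linear maps with the same kernel have the same rank. -/
theorem finrank_range_eq_of_ker_eq {V W₁ W₂ : Type*} [AddCommGroup V] [Module K V]
    [AddCommGroup W₁] [Module K W₁] [AddCommGroup W₂] [Module K W₂]
    (f : V →ₗ[K] W₁) (g : V →ₗ[K] W₂) (h : ∀ v, f v = 0 ↔ g v = 0) :
    Module.finrank K (LinearMap.range f) = Module.finrank K (LinearMap.range g) := by
  have hk : LinearMap.ker f = LinearMap.ker g := by
    ext v
    simpa using h v
  rw [← f.quotKerEquivRange.finrank_eq, ← g.quotKerEquivRange.finrank_eq, hk]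

/-- The rank of a matrix over a field is invariant under field extension. -/
theorem rank_map_algebraMap {L : Type*} [Field L] [Algebra K L] {m n : Type*} [Fintype m]
    [Fintype n] (A : Matrix m n K) : (A.map (algebraMap K L)).rank = A.rank := by
  have hcol := Matrix.rank_eq_finrank_range_toLin A (Pi.basisFun K m) (Pi.basisFun K n)
  set f := Matrix.toLin (Pi.basisFun K n) (Pi.basisFun K m) A with hf
  set r := A.rank with hr
  let b : Module.Basis (Fin r) K (LinearMap.range f) := Module.finBasisOfFinrankEq K _ hcol.symm
  choose q hq using fun i => (b i).2
  obtain ⟨P, hP⟩ := (LinearMap.range f).subtype.exists_leftInverse_of_injective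
    (Submodule.ker_subtype _)
  have hA : f = A.mulVecLin := by
    rw [hf, Matrix.toLin_eq_toLin']
    rfl
  have hfac : ∃ (B : Matrix m (Fin r) K) (C : Matrix (Fin r) n K), A = B * C := by
    refine ⟨Matrix.of fun i k => (b k : m → K) i,
      Matrix.of fun k j => b.repr ⟨f (Pi.single j 1), _, rfl⟩ k, ?_⟩
    ext i j
    have h1 := congrArg (fun v : LinearMap.range f => (v : m → K) i)
      (b.sum_repr ⟨f (Pi.single j 1), _, rfl⟩)
    simp only [Submodule.coe_sum, Submodule.coe_smul, Finset.sum_apply, Pi.smul_apply,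
      smul_eq_mul] at h1
    rw [Matrix.mul_apply]
    simp only [Matrix.of_apply]
    rw [show A i j = f (Pi.single j 1) i by simp [hA], ← h1]
    exact Finset.sum_congr rfl fun k _ => mul_comm _ _
  have hinv : ∃ (B : Matrix (Fin r) m K) (C : Matrix n (Fin r) K), B * A * C = 1 := by
    refine ⟨LinearMap.toMatrix' (b.equivFun.toLinearMap ∘ₗ P), Matrix.of fun j k => q k j, ?_⟩
    ext i k
    have h1 : (LinearMap.toMatrix' (b.equivFun.toLinearMap ∘ₗ P) * A *
        Matrix.of fun j k => q k j) i k =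
        (LinearMap.toMatrix' (b.equivFun.toLinearMap ∘ₗ P)).mulVec (A.mulVec (q k)) i := by
      rw [Matrix.mulVec_mulVec]
      rfl
    rw [h1, ← Matrix.mulVecLin_apply A, ← hA, hq, LinearMap.toMatrix'_mulVec]
    have h2 : P (b k : m → K) = b k := LinearMap.congr_fun hP (b k)
    simp [h2, Matrix.one_apply, eq_comm]
  apply le_antisymm
  · obtain ⟨B, C, h⟩ := hfac
    rw [h, Matrix.map_mul]
    refine (Matrix.rank_mul_le_left _ _).trans ((Matrix.rank_le_card_width _).trans ?_)
    simp
  · obtain ⟨B, C, h⟩ := hinv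
    have h1 := congrArg (fun M : Matrix (Fin r) (Fin r) K => (M.map (algebraMap K L)).rank) h
    simp only [Matrix.map_mul] at h1
    rw [Matrix.map_one _ (map_zero _) (map_one _), Matrix.rank_one, Fintype.card_fin] at h1
    rw [← h1]
    exact (Matrix.rank_mul_le_left _ _).trans (Matrix.rank_mul_le_right _ _)

/-! ### Hilbert functions as ranks -/

/-- Exponents of monomials of degree `i` in `n` variables. -/
abbrev Expo (n i : ℕ) : Type := {d : Fin n →₀ ℕ // d.degree = i}

instance expoFintype (n i : ℕ) : Fintype (Expo n i) :=
  (Finsupp.finite_of_degree_le (σ := Fin n) i |>.subset fun _ h => le_of_eq h).fintype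

theorem hilbFn_eq_finrank_range (I : Ideal (MvPolynomial (Fin n) K)) (i : ℕ) {W : Type*}
    [AddCommGroup W] [Module K W] (g : homogeneousSubmodule (Fin n) K i →ₗ[K] W)
    (h : ∀ p : homogeneousSubmodule (Fin n) K i,
      g p = 0 ↔ (p : MvPolynomial (Fin n) K) ∈ I) :
    hilbFn I i = Module.finrank K (LinearMap.range g) := by
  have h1 : gradedPiece I i = LinearMap.range
      ((Ideal.Quotient.mkₐ K I).toLinearMap ∘ₗ (homogeneousSubmodule (Fin n) K i).subtype) := by
    rw [LinearMap.range_comp, Submodule.range_subtype]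
    rfl
  rw [hilbFn, h1]
  refine finrank_range_eq_of_ker_eq _ _ fun p => ?_
  rw [h]
  simp [Ideal.Quotient.eq_zero_iff_mem]

/-- The catalecticant matrix of a linear functional on the polynomial ring. -/
def catMatrix (φ : MvPolynomial (Fin n) K →ₗ[K] K) (a b : ℕ) : Matrix (Expo n a) (Expo n b) K :=
  fun d e => φ (monomial d.1 1 * monomial e.1 1)

theorem rank_catMatrix_comm (φ : MvPolynomial (Fin n) K →ₗ[K] K) (a b : ℕ) :
    (catMatrix φ a b).rank = (catMatrix φ b a).rank := by
  rw [← Matrix.rank_transpose]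
  congr 1
  ext d e
  simp [catMatrix, mul_comm]

/-- The pairing of polynomials of degree `a` with monomials of degree `b`. -/
def catMap (φ : MvPolynomial (Fin n) K →ₗ[K] K) (a b : ℕ) :
    homogeneousSubmodule (Fin n) K a →ₗ[K] (Expo n b → K) where
  toFun p e := φ ((p : MvPolynomial (Fin n) K) * monomial e.1 1)
  map_add' p q := by
    ext e
    simp [add_mul]
  map_smul' c p := by
    ext e
    simp

theorem isHomogeneous_eq_sum {a : ℕ} {p : MvPolynomial (Fin n) K} (hp : p.IsHomogeneous a) :
    p = ∑ d : Expo n a, coeff d.1 p • monomial d.1 1 := by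
  ext m
  simp only [coeff_sum, coeff_smul, coeff_monomial, smul_eq_mul, mul_ite, mul_one, mul_zero]
  by_cases hm : m.degree = a
  · rw [Finset.sum_eq_single (⟨m, hm⟩ : Expo n a)]
    · simp
    · intro b _ hb
      rw [if_neg]
      exact fun h => hb (Subtype.ext h)
    · simp
  · rw [hp.coeff_eq_zero hm, Finset.sum_eq_zero]
    intro d _
    rw [if_neg]
    rintro rfl
    exact hm d.2

theorem catMap_eq_zero_iff (φ : MvPolynomial (Fin n) K →ₗ[K] K) (a b : ℕ)
    (p : homogeneousSubmodule (Fin n) K a) :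
    catMap φ a b p = 0 ↔ ∀ q : MvPolynomial (Fin n) K, q.IsHomogeneous b → φ (p * q) = 0 := by
  constructor
  · intro h q hq
    rw [isHomogeneous_eq_sum hq, Finset.mul_sum, map_sum]
    refine Finset.sum_eq_zero fun d _ => ?_
    rw [mul_smul_comm, map_smul]
    have := congrFun h d
    simp only [catMap, LinearMap.coe_mk, AddHom.coe_mk, Pi.zero_apply] at this
    rw [this, smul_zero]
  · intro h
    ext e
    exact h _ (isHomogeneous_monomial _ e.2)

theorem finrank_range_catMap (φ : MvPolynomial (Fin n) K →ₗ[K] K) (a b : ℕ) :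
    Module.finrank K (LinearMap.range (catMap φ a b)) = (catMatrix φ a b).rank := by
  rw [rank_catMatrix_comm, Matrix.rank]
  let s : (Expo n a → K) →ₗ[K] homogeneousSubmodule (Fin n) K a :=
    Fintype.linearCombination K fun d : Expo n a =>
      (⟨monomial d.1 1, isHomogeneous_monomial _ d.2⟩ : homogeneousSubmodule (Fin n) K a)
  have hs : LinearMap.range s = ⊤ := by
    rw [eq_top_iff]
    rintro ⟨p, hp⟩ -
    refine ⟨fun d => coeff d.1 p, ?_⟩
    ext1
    simp only [s, Fintype.linearCombination_apply, Submodule.coe_sum, Submodule.coe_smul]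
    exact (isHomogeneous_eq_sum hp).symm
  have h : (catMatrix φ b a).mulVecLin = catMap φ a b ∘ₗ s := by
    refine LinearMap.ext fun c => ?_
    ext e
    simp [s, Matrix.mulVec, dotProduct, Fintype.linearCombination_apply, catMatrix, catMap,
      mul_comm, Finset.mul_sum]
  rw [h, LinearMap.range_comp, hs, Submodule.map_top]

theorem hilbFn_eq_rank_catMatrix (I : Ideal (MvPolynomial (Fin n) K))
    (φ : MvPolynomial (Fin n) K →ₗ[K] K) (a b : ℕ)
    (h : ∀ p : MvPolynomial (Fin n) K, p.IsHomogeneous a →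
      (p ∈ I ↔ ∀ q : MvPolynomial (Fin n) K, q.IsHomogeneous b → φ (p * q) = 0)) :
    hilbFn I a = (catMatrix φ a b).rank := by
  rw [← finrank_range_catMap]
  refine hilbFn_eq_finrank_range I a _ fun p => ?_
  rw [catMap_eq_zero_iff, h p p.2]

/-! ### Gorenstein algebras and linear functionals -/

theorem finiteDimensional_quotient_of_monomial_mem (I : Ideal (MvPolynomial (Fin n) K)) (N : ℕ)
    (h : ∀ d : Fin n →₀ ℕ, N < d.degree → monomial d (1 : K) ∈ I) :
    FiniteDimensional K (MvPolynomial (Fin n) K ⧸ I) := by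
  refine Module.Finite.of_surjective
    ((Ideal.Quotient.mkₐ K I).toLinearMap ∘ₗ (restrictTotalDegree (Fin n) K N).subtype) ?_
  intro x
  obtain ⟨p, rfl⟩ := Ideal.Quotient.mk_surjective x
  induction p using MvPolynomial.induction_on' with
  | monomial d c =>
    by_cases hd : N < d.degree
    · refine ⟨0, ?_⟩
      rw [map_zero, eq_comm, Ideal.Quotient.eq_zero_iff_mem, ← mul_one c, ← smul_eq_mul,
        ← smul_monomial, smul_eq_C_mul]
      exact I.mul_mem_left _ (h d hd)
    · refine ⟨⟨monomial d c, ?_⟩, rfl⟩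
      rw [mem_restrictTotalDegree]
      refine (totalDegree_monomial_le _ _).trans ?_
      exact not_lt.mp hd
  | add p q hp hq =>
    obtain ⟨a, ha⟩ := hp
    obtain ⟨b, hb⟩ := hq
    exact ⟨a + b, by rw [map_add, ha, hb, map_add]⟩

theorem mem_of_hilbFn_eq_zero {I : Ideal (MvPolynomial (Fin n) K)}
    [FiniteDimensional K (MvPolynomial (Fin n) K ⧸ I)] {i : ℕ} (h : hilbFn I i = 0)
    {p : MvPolynomial (Fin n) K} (hp : p.IsHomogeneous i) : p ∈ I := by
  have h1 : gradedPiece I i = ⊥ := Submodule.finrank_eq_zero.mp h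
  have h2 : Ideal.Quotient.mk I p ∈ gradedPiece I i := ⟨p, hp, rfl⟩
  rw [h1] at h2
  exact Ideal.Quotient.eq_zero_iff_mem.mp h2

theorem exists_notMem_of_hilbFn_ne_zero {I : Ideal (MvPolynomial (Fin n) K)} {i : ℕ}
    (h : hilbFn I i ≠ 0) : ∃ p : MvPolynomial (Fin n) K, p.IsHomogeneous i ∧ p ∉ I := by
  by_contra! hc
  apply h
  have h1 : gradedPiece I i = ⊥ := by
    rw [eq_bot_iff]
    rintro _ ⟨p, hp, rfl⟩
    exact Ideal.Quotient.eq_zero_iff_mem.mpr (hc p hp)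
  rw [hilbFn, h1, finrank_bot]

theorem mk_mem_socleSub_iff {I : Ideal (MvPolynomial (Fin n) K)} {p : MvPolynomial (Fin n) K} :
    Ideal.Quotient.mk I p ∈ socleSub I ↔ ∀ v, X v * p ∈ I := by
  simp only [socleSub, Submodule.mem_iInf, LinearMap.mem_ker, LinearMap.mulLeft_apply,
    ← map_mul, Ideal.Quotient.eq_zero_iff_mem]

/-- A Gorenstein algebra with top degree `j` is determined, degree by degree, by a linear
functional. -/
theorem IsAG.exists_functional {I : Ideal (MvPolynomial (Fin n) K)} (hI : IsAG I) {j : ℕ}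
    (hj : hilbFn I j ≠ 0) (hv : ∀ i, j < i → hilbFn I i = 0) :
    ∃ φ : MvPolynomial (Fin n) K →ₗ[K] K, ∀ a b, a + b = j → ∀ p : MvPolynomial (Fin n) K,
      p.IsHomogeneous a →
        (p ∈ I ↔ ∀ q : MvPolynomial (Fin n) K, q.IsHomogeneous b → φ (p * q) = 0) := by
  obtain ⟨hhom, -, hfin, hsoc⟩ := hI
  have htop : ∀ p : MvPolynomial (Fin n) K, p.IsHomogeneous j →
      Ideal.Quotient.mk I p ∈ socleSub I := fun p hp => mk_mem_socleSub_iff.mpr fun v =>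
    mem_of_hilbFn_eq_zero (hv (1 + j) (by omega)) ((isHomogeneous_X K v).mul hp)
  obtain ⟨s, hs, hsI⟩ := exists_notMem_of_hilbFn_ne_zero hj
  have hs0 : Ideal.Quotient.mk I s ≠ 0 := fun h => hsI (Ideal.Quotient.eq_zero_iff_mem.mp h)
  have hspan : ∀ x ∈ socleSub I, ∃ c : K, c • Ideal.Quotient.mk I s = x := by
    intro x hx
    obtain ⟨c, hc⟩ := (finrank_eq_one_iff_of_nonzero' (⟨_, htop s hs⟩ : socleSub I)
      (fun h => hs0 (congrArg Subtype.val h))).mp hsoc ⟨x, hx⟩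
    exact ⟨c, congrArg Subtype.val hc⟩
  obtain ⟨φ, hφ⟩ : ∃ φ : (MvPolynomial (Fin n) K ⧸ I) →ₗ[K] K, φ (Ideal.Quotient.mk I s) ≠ 0 := by
    by_contra! hc
    exact hs0 ((Module.forall_dual_apply_eq_zero_iff K _).mp hc)
  have hmul : ∀ b a, a + b = j → ∀ p : MvPolynomial (Fin n) K, p.IsHomogeneous a → p ∉ I →
      ∃ q : MvPolynomial (Fin n) K, q.IsHomogeneous b ∧ p * q ∉ I := by
    intro b
    induction b with
    | zero => exact fun a _ p _ hpI => ⟨1, isHomogeneous_one _ _, by rwa [mul_one]⟩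
    | succ b ih =>
      intro a hab p hp hpI
      obtain ⟨v, hv⟩ : ∃ v, X v * p ∉ I := by
        by_contra! hc
        obtain ⟨c, hc⟩ := hspan _ (mk_mem_socleSub_iff.mpr hc)
        have h1 : p - c • s ∈ I := by
          rw [← Ideal.Quotient.mk_eq_mk_iff_sub_mem, ← hc]
          rfl
        have h2 := hhom _ h1 a
        rw [map_sub, map_smul, homogeneousComponent_of_mem hp, homogeneousComponent_of_mem hs,
          if_pos rfl, if_neg (by omega), smul_zero, sub_zero] at h2
        exact hpI h2
      obtain ⟨q, hq, hqI⟩ := ih (1 + a) (by omega) _ ((isHomogeneous_X K v).mul hp) hv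
      refine ⟨X v * q, ?_, ?_⟩
      · rw [add_comm b 1]
        exact (isHomogeneous_X K v).mul hq
      · rwa [← mul_assoc, mul_comm p]
  refine ⟨φ ∘ₗ (Ideal.Quotient.mkₐ K I).toLinearMap, fun a b hab p hp => ⟨fun h q _ => ?_, ?_⟩⟩
  · have : Ideal.Quotient.mk I (p * q) = 0 :=
      Ideal.Quotient.eq_zero_iff_mem.mpr (I.mul_mem_right _ h)
    simp only [LinearMap.comp_apply, AlgHom.toLinearMap_apply, Ideal.Quotient.mkₐ_eq_mk, this,
      map_zero]
  · contrapose!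
    intro hpI
    obtain ⟨q, hq, hqI⟩ := hmul b a hab p hp hpI
    refine ⟨q, hq, ?_⟩
    obtain ⟨c, hc⟩ := hspan _ (htop (p * q) (hab ▸ hp.mul hq))
    simp only [LinearMap.comp_apply, AlgHom.toLinearMap_apply, Ideal.Quotient.mkₐ_eq_mk, ← hc,
      map_smul, smul_eq_mul]
    refine mul_ne_zero ?_ hφ
    rintro rfl
    rw [zero_smul, eq_comm, Ideal.Quotient.eq_zero_iff_mem] at hc
    exact hqI hc

/-- The polynomials all of whose multiples are killed by a linear functional. -/
def annIdeal (φ : MvPolynomial (Fin n) K →ₗ[K] K) : Ideal (MvPolynomial (Fin n) K) where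
  carrier := {p | ∀ q, φ (p * q) = 0}
  zero_mem' q := by simp
  add_mem' hp hq r := by rw [add_mul, map_add, hp r, hq r, add_zero]
  smul_mem' c p hp q := by rw [smul_eq_mul, mul_comm c, mul_assoc, hp]

theorem mem_annIdeal_iff_monomial {φ : MvPolynomial (Fin n) K →ₗ[K] K}
    {p : MvPolynomial (Fin n) K} :
    p ∈ annIdeal φ ↔ ∀ d, φ (p * monomial d 1) = 0 := by
  refine ⟨fun h d => h _, fun h q => ?_⟩
  induction q using MvPolynomial.induction_on' with
  | monomial d c =>
    rw [show monomial d c = c • monomial d (1 : K) by rw [smul_monomial, smul_eq_mul, mul_one],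
      mul_smul_comm, map_smul, h, smul_zero]
  | add q r hq hr => rw [mul_add, map_add, hq, hr, add_zero]

section Functional

variable {φ : MvPolynomial (Fin n) K →ₗ[K] K} {j : ℕ}

theorem mem_annIdeal_iff_of_isHomogeneous
    (hφ : ∀ k, k ≠ j → ∀ q : MvPolynomial (Fin n) K, q.IsHomogeneous k → φ q = 0)
    {a b : ℕ} (hab : a + b = j) {p : MvPolynomial (Fin n) K} (hp : p.IsHomogeneous a) :
    p ∈ annIdeal φ ↔ ∀ q : MvPolynomial (Fin n) K, q.IsHomogeneous b → φ (p * q) = 0 := by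
  refine ⟨fun h q _ => h q, fun h => mem_annIdeal_iff_monomial.mpr fun d => ?_⟩
  by_cases hd : d.degree = b
  · exact h _ (isHomogeneous_monomial _ hd)
  · exact hφ (a + d.degree) (by omega) _ (hp.mul (isHomogeneous_monomial _ rfl))

theorem mem_annIdeal_of_lt
    (hφ : ∀ k, k ≠ j → ∀ q : MvPolynomial (Fin n) K, q.IsHomogeneous k → φ q = 0)
    {a : ℕ} (ha : j < a) {p : MvPolynomial (Fin n) K} (hp : p.IsHomogeneous a) :
    p ∈ annIdeal φ := mem_annIdeal_iff_monomial.mpr fun d =>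
  hφ (a + d.degree) (by omega) _ (hp.mul (isHomogeneous_monomial _ rfl))

theorem isHomogIdeal_annIdeal
    (hφ : ∀ k, k ≠ j → ∀ q : MvPolynomial (Fin n) K, q.IsHomogeneous k → φ q = 0) :
    IsHomogIdeal (annIdeal φ) := by
  intro p hp i
  have hi := homogeneousComponent_isHomogeneous i p
  rcases lt_or_ge j i with hij | hij
  · exact mem_annIdeal_of_lt hφ hij hi
  rw [mem_annIdeal_iff_of_isHomogeneous hφ (show i + (j - i) = j by omega) hi]
  intro q hq
  rw [← hp q]
  conv_rhs => rw [← sum_homogeneousComponent p, Finset.sum_mul, map_sum]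
  rw [Finset.sum_eq_single i]
  · intro k _ hk
    exact hφ (k + (j - i)) (by omega) _ ((homogeneousComponent_isHomogeneous k p).mul hq)
  · intro hi
    rw [homogeneousComponent_eq_zero _ _ (by simpa [Nat.lt_succ_iff] using hi), zero_mul, map_zero]

theorem isAG_annIdeal
    (hφ : ∀ k, k ≠ j → ∀ q : MvPolynomial (Fin n) K, q.IsHomogeneous k → φ q = 0)
    (h0 : φ ≠ 0) : IsAG (annIdeal φ) := by
  obtain ⟨d, hd⟩ : ∃ d, φ (monomial d 1) ≠ 0 := by
    by_contra! hc
    refine h0 (LinearMap.ext fun q => ?_)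
    have := mem_annIdeal_iff_monomial (φ := φ) (p := 1) |>.mpr (by simpa using hc)
    simpa using this q
  have hdj : d.degree = j := by
    by_contra h
    exact hd (hφ _ h _ (isHomogeneous_monomial _ rfl))
  have hdI : monomial d (1 : K) ∉ annIdeal φ := fun h => hd (by simpa using h 1)
  refine ⟨isHomogIdeal_annIdeal hφ, fun h => hdI (h ▸ Submodule.mem_top),
    finiteDimensional_quotient_of_monomial_mem _ j fun e he =>
      mem_annIdeal_of_lt hφ he (isHomogeneous_monomial _ rfl), ?_⟩
  have hsoc : ∀ p : MvPolynomial (Fin n) K, (∀ v, X v * p ∈ annIdeal φ) →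
      ∀ e, e ≠ 0 → φ (p * monomial e 1) = 0 := by
    intro p hp e he
    obtain ⟨v, hv⟩ := Finsupp.ne_iff.mp he
    have h1 : monomial e (1 : K) = X v * monomial (e - Finsupp.single v 1) 1 := by
      rw [X, monomial_mul, one_mul, add_tsub_cancel_of_le]
      rw [Finsupp.single_le_iff]
      exact Nat.one_le_iff_ne_zero.mpr hv
    rw [h1, ← mul_assoc, mul_comm p]
    exact hp v _
  have hdsoc : ∀ v, X v * monomial d (1 : K) ∈ annIdeal φ := fun v =>
    mem_annIdeal_of_lt hφ (a := 1 + d.degree) (by omega)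
      ((isHomogeneous_X K v).mul (isHomogeneous_monomial _ rfl))
  refine finrank_eq_one (⟨_, mk_mem_socleSub_iff.mpr hdsoc⟩ : socleSub (annIdeal φ)) ?_ ?_
  · intro h
    exact hdI (Ideal.Quotient.eq_zero_iff_mem.mp (congrArg Subtype.val h))
  · rintro ⟨x, hx⟩
    obtain ⟨p, rfl⟩ := Ideal.Quotient.mk_surjective x
    rw [mk_mem_socleSub_iff] at hx
    refine ⟨φ p / φ (monomial d 1), Subtype.ext ?_⟩
    change Ideal.Quotient.mk (annIdeal φ) ((φ p / φ (monomial d 1)) • monomial d 1) = _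
    rw [Ideal.Quotient.mk_eq_mk_iff_sub_mem, mem_annIdeal_iff_monomial]
    intro e
    rw [sub_mul, map_sub, smul_mul_assoc, map_smul]
    by_cases he : e = 0
    · subst he
      simp [div_mul_cancel₀ _ hd]
    · rw [hsoc p hx e he, hsoc _ hdsoc e he, smul_zero, sub_zero]

end Functional

/-! ### O-sequences of codimension two -/

/-- Macaulay's growth conditions for the Hilbert function of a quotient of a polynomial ring in
two variables. -/
def IsOSeqTwo (δ : ℕ → ℕ) : Prop :=
  (∀ i, δ i ≤ i + 1) ∧ ∀ i, δ i ≤ i → δ (i + 1) ≤ δ i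

theorem finrank_lt_finrank_of_X_mul_mem {N : ℕ} {W W' : Submodule K (Polynomial K)}
    (hN : W ≤ Polynomial.degreeLT K N) (hN' : W' ≤ Polynomial.degreeLT K (N + 1))
    (hle : W ≤ W') (hX : ∀ p ∈ W, Polynomial.X * p ∈ W') (hW : W ≠ ⊥) :
    Module.finrank K W < Module.finrank K W' := by
  have : FiniteDimensional K (Polynomial.degreeLT K (N + 1)) :=
    Module.Finite.equiv (Polynomial.degreeLTEquiv K (N + 1)).symm
  have : FiniteDimensional K W' := Submodule.finiteDimensional_of_le hN'
  refine Submodule.finrank_lt_finrank_of_lt (lt_of_le_of_ne hle ?_)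
  rintro rfl
  obtain ⟨p, hp, hp0⟩ := Submodule.exists_mem_ne_zero_of_ne_bot hW
  have hpow : ∀ k, Polynomial.X ^ k * p ∈ W := by
    intro k
    induction k with
    | zero => simpa using hp
    | succ k ih => simpa [pow_succ', mul_assoc] using hX _ ih
  have h1 := Polynomial.mem_degreeLT.mp (hN (hpow N))
  rw [Polynomial.degree_mul, Polynomial.degree_X_pow, Polynomial.degree_eq_natDegree hp0] at h1
  norm_cast at h1
  omega

theorem finrank_degreeLT (N : ℕ) : Module.finrank K (Polynomial.degreeLT K N) = N := by
  rw [(Polynomial.degreeLTEquiv K N).finrank_eq, Module.finrank_fin_fun]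

instance finiteDimensional_degreeLT (N : ℕ) :
    FiniteDimensional K (Polynomial.degreeLT K N) :=
  Module.Finite.equiv (Polynomial.degreeLTEquiv K N).symm

theorem X_mul_mem_degreeLT {N : ℕ} {p : Polynomial K} (hp : p ∈ Polynomial.degreeLT K N) :
    Polynomial.X * p ∈ Polynomial.degreeLT K (N + 1) := by
  rw [Polynomial.mem_degreeLT, Polynomial.degree_lt_iff_coeff_zero] at hp ⊢
  intro k hk
  obtain ⟨k, rfl⟩ : ∃ l, k = l + 1 := ⟨k - 1, by omega⟩
  rw [Polynomial.coeff_X_mul]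
  exact hp k (by omega)

/-- The `i`-th homogenization of a univariate polynomial, evaluated at `(u, v)`. -/
def homogEval {A : Type*} [CommRing A] [Algebra K A] (u v : A) (i : ℕ) :
    Polynomial K →ₗ[K] A :=
  ∑ k ∈ Finset.range (i + 1), (LinearMap.toSpanSingleton K A (u ^ (i - k) * v ^ k)) ∘ₗ
    Polynomial.lcoeff K k

section HomogEval

variable {A : Type*} [CommRing A] [Algebra K A] (u v : A)

theorem homogEval_apply (i : ℕ) (p : Polynomial K) :
    homogEval u v i p = ∑ k ∈ Finset.range (i + 1), p.coeff k • (u ^ (i - k) * v ^ k) := by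
  simp [homogEval]

theorem homogEval_succ {i : ℕ} {p : Polynomial K} (hp : p ∈ Polynomial.degreeLT K (i + 1)) :
    homogEval u v (i + 1) p = u * homogEval u v i p := by
  rw [homogEval_apply, Finset.sum_range_succ, homogEval_apply, Finset.mul_sum,
    Polynomial.coeff_eq_zero_of_degree_lt (Polynomial.mem_degreeLT.mp hp), zero_smul, add_zero]
  refine Finset.sum_congr rfl fun k hk => ?_
  rw [show i + 1 - k = (i - k) + 1 by have := Finset.mem_range.mp hk; omega, pow_succ',
    mul_smul_comm, mul_assoc]

theorem homogEval_succ_X_mul (i : ℕ) (p : Polynomial K) :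
    homogEval u v (i + 1) (Polynomial.X * p) = v * homogEval u v i p := by
  rw [homogEval_apply, Finset.sum_range_succ', homogEval_apply, Finset.mul_sum,
    Polynomial.coeff_X_mul_zero, zero_smul, add_zero]
  refine Finset.sum_congr rfl fun k hk => ?_
  rw [Polynomial.coeff_X_mul, show i + 1 - (k + 1) = i - k by omega, pow_succ, mul_smul_comm]
  congr 1
  ring

theorem span_pair_pow_eq (i : ℕ) : Submodule.span K {u, v} ^ i =
    (Polynomial.degreeLT K (i + 1)).map (homogEval u v i) := by
  apply le_antisymm
  · induction i with
    | zero =>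
      rw [pow_zero, Submodule.one_le]
      refine ⟨1, ?_, by simp [homogEval_apply]⟩
      rw [SetLike.mem_coe, Polynomial.mem_degreeLT]
      exact Polynomial.degree_one_le.trans_lt (by simp)
    | succ i ih =>
      rw [pow_succ', Submodule.mul_le]
      intro m hm w hw
      obtain ⟨p, hp, rfl⟩ := ih hw
      obtain ⟨a, b, rfl⟩ := Submodule.mem_span_pair.mp hm
      have hp' : p ∈ Polynomial.degreeLT K (i + 1 + 1) :=
        Polynomial.degreeLT_mono (Nat.le_succ _) hp
      have hXp : Polynomial.X * p ∈ Polynomial.degreeLT K (i + 1 + 1) :=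
        X_mul_mem_degreeLT hp
      refine ⟨a • p + b • (Polynomial.X * p), add_mem (Submodule.smul_mem _ _ hp')
        (Submodule.smul_mem _ _ hXp), ?_⟩
      rw [map_add, map_smul, map_smul, homogEval_succ u v hp, homogEval_succ_X_mul, add_mul,
        smul_mul_assoc, smul_mul_assoc]
  · rintro _ ⟨p, -, rfl⟩
    rw [homogEval_apply]
    refine Submodule.sum_mem _ fun k hk => Submodule.smul_mem _ _ ?_
    rw [show i = (i - k) + k by have := Finset.mem_range.mp hk; omega, pow_add,
      Nat.add_sub_cancel]
    exact Submodule.mul_mem_mul (Submodule.pow_mem_pow _ (Submodule.subset_span (by simp)) _)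
      (Submodule.pow_mem_pow _ (Submodule.subset_span (by simp)) _)

/-- The ranks of the powers of a two-dimensional space in a commutative algebra satisfy
Macaulay's growth conditions. -/
theorem isOSeqTwo_finrank_span_pair_pow :
    IsOSeqTwo fun i => Module.finrank K (Submodule.span K {u, v} ^ i : Submodule K A) := by
  set f : ∀ i : ℕ, Polynomial.degreeLT K (i + 1) →ₗ[K] A := fun i =>
    (homogEval u v i).domRestrict _ with hf
  set W : ℕ → Submodule K (Polynomial K) := fun i =>
    (LinearMap.ker (f i)).map (Polynomial.degreeLT K (i + 1)).subtype with hW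
  have hrank : ∀ i, Module.finrank K (Submodule.span K {u, v} ^ i : Submodule K A) +
      Module.finrank K (W i) = i + 1 := by
    intro i
    have h1 := LinearMap.finrank_range_add_finrank_ker (f i)
    rw [finrank_degreeLT] at h1
    rw [hf, LinearMap.range_domRestrict] at h1
    rw [Submodule.finrank_map_subtype_eq, span_pair_pow_eq]
    exact h1
  have hmem : ∀ i p, p ∈ W i ↔ p ∈ Polynomial.degreeLT K (i + 1) ∧ homogEval u v i p = 0 := by
    intro i p
    simp [hW, hf, LinearMap.mem_ker, and_comm]
  refine ⟨fun i => by have := hrank i; dsimp only; omega, fun i hi => ?_⟩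
  have hlt : Module.finrank K (W i) < Module.finrank K (W (i + 1)) := by
    refine finrank_lt_finrank_of_X_mul_mem (N := i + 1) (fun p hp => ((hmem i p).mp hp).1)
      (fun p hp => ((hmem _ p).mp hp).1) (fun p hp => ?_) (fun p hp => ?_) ?_
    · rw [hmem] at hp ⊢
      exact ⟨Polynomial.degreeLT_mono (Nat.le_succ _) hp.1,
        by rw [homogEval_succ u v hp.1, hp.2, mul_zero]⟩
    · rw [hmem] at hp ⊢
      exact ⟨X_mul_mem_degreeLT hp.1, by rw [homogEval_succ_X_mul, hp.2, mul_zero]⟩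
    · intro h
      have := hrank i
      rw [h, finrank_bot] at this
      dsimp only at hi
      omega
  have h1 := hrank i
  have h2 := hrank (i + 1)
  dsimp only
  omega

end HomogEval

theorem gradedPiece_eq_pow (I : Ideal (MvPolynomial (Fin n) K)) (i : ℕ) :
    gradedPiece I i = gradedPiece I 1 ^ i := by
  rw [gradedPiece, gradedPiece, ← homogeneousSubmodule_one_pow, Submodule.map_pow]

instance finiteDimensional_gradedPiece (I : Ideal (MvPolynomial (Fin n) K)) (i : ℕ) :
    FiniteDimensional K (gradedPiece I i) :=
  Module.Finite.iff_fg.mpr ((homogeneousSubmodule_fg (Fin n) K i).map _)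

theorem isOSeqTwo_hilbFn {I : Ideal (MvPolynomial (Fin n) K)} (h : hilbFn I 1 = 2) :
    IsOSeqTwo (hilbFn I) := by
  let b : Module.Basis (Fin 2) K (gradedPiece I 1) := Module.finBasisOfFinrankEq K _ h
  have hspan : gradedPiece I 1 = Submodule.span K {(b 0 : MvPolynomial (Fin n) K ⧸ I), ↑(b 1)} := by
    have h1 := congrArg (Submodule.map (gradedPiece I 1).subtype) b.span_eq
    rw [Submodule.map_span, Submodule.map_top, Submodule.range_subtype] at h1
    refine h1.symm.trans (congrArg _ ?_)
    ext x
    simp [Fin.exists_fin_two, eq_comm]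
  have h2 := isOSeqTwo_finrank_span_pair_pow (K := K) (b 0 : MvPolynomial (Fin n) K ⧸ I) (b 1)
  rw [← hspan] at h2
  have h3 : hilbFn I = fun i => Module.finrank K
      (gradedPiece I 1 ^ i : Submodule K (MvPolynomial (Fin n) K ⧸ I)) := by
    funext i
    rw [hilbFn, gradedPiece_eq_pow]
  rw [h3]
  exact h2

/-- The lexicographic monomial ideal in two variables with Hilbert function `δ`. -/
def lexIdeal (K : Type*) [Field K] {δ : ℕ → ℕ} (h : IsOSeqTwo δ) :
    Ideal (MvPolynomial (Fin 2) K) where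
  carrier := {p | ∀ d : Fin 2 →₀ ℕ, d 0 < δ d.degree → coeff d p = 0}
  zero_mem' d _ := coeff_zero d
  add_mem' hp hq d hd := by rw [coeff_add, hp d hd, hq d hd, add_zero]
  smul_mem' c p hp d hd := by
    have hmono : ∀ i k, δ i ≤ i → δ (i + k) ≤ δ i := by
      intro i k hi
      induction k with
      | zero => exact le_rfl
      | succ k ih => exact (h.2 (i + k) (by omega)).trans ih
    rw [smul_eq_mul, coeff_mul]
    refine Finset.sum_eq_zero fun x hx => ?_
    have hx := Finset.HasAntidiagonal.mem_antidiagonal.mp hx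
    rw [hp x.2 ?_, mul_zero]
    subst hx
    rw [Finsupp.coe_add, Pi.add_apply, map_add, add_comm x.1.degree] at hd
    by_contra hc
    have h2 : x.2 0 ≤ x.2.degree := Finsupp.le_degree 0 x.2
    have := hmono x.2.degree x.1.degree (by omega)
    omega

theorem mem_lexIdeal {δ : ℕ → ℕ} (h : IsOSeqTwo δ) {p : MvPolynomial (Fin 2) K} :
    p ∈ lexIdeal K h ↔ ∀ d : Fin 2 →₀ ℕ, d 0 < δ d.degree → coeff d p = 0 := Iff.rfl

/-- The exponent of the monomial of degree `i` in two variables with given first exponent. -/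
def expoTwo (i u : ℕ) : Fin 2 →₀ ℕ := Finsupp.single 0 u + Finsupp.single 1 (i - u)

theorem expoTwo_zero (i u : ℕ) : expoTwo i u 0 = u := by simp [expoTwo]

theorem degree_expoTwo {i u : ℕ} (h : u ≤ i) : (expoTwo i u).degree = i := by
  rw [expoTwo, map_add, Finsupp.degree_single, Finsupp.degree_single]
  omega

theorem eq_expoTwo {i : ℕ} {d : Fin 2 →₀ ℕ} (hd : d.degree = i) : d = expoTwo i (d 0) := by
  rw [Finsupp.degree_eq_sum, Fin.sum_univ_two] at hd
  ext k
  fin_cases k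
  · simp [expoTwo]
  · simp [expoTwo]
    omega

theorem hilbFn_lexIdeal {δ : ℕ → ℕ} (h : IsOSeqTwo δ) (i : ℕ) : hilbFn (lexIdeal K h) i = δ i := by
  let g : homogeneousSubmodule (Fin 2) K i →ₗ[K] (Fin (δ i) → K) :=
    LinearMap.pi fun u => lcoeff K (expoTwo i u) ∘ₗ (homogeneousSubmodule (Fin 2) K i).subtype
  have hg : ∀ p u, g p u = coeff (expoTwo i u) (p : MvPolynomial (Fin 2) K) := fun _ _ => rfl
  have hui : ∀ u : Fin (δ i), (u : ℕ) ≤ i := fun u => by have := h.1 i; omega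
  rw [hilbFn_eq_finrank_range _ i g]
  · have : LinearMap.range g = ⊤ := by
      rw [LinearMap.range_eq_top]
      intro c
      refine ⟨∑ u, c u • ⟨monomial (expoTwo i u) 1,
        isHomogeneous_monomial _ (degree_expoTwo (hui u))⟩, ?_⟩
      ext w
      rw [hg, Submodule.coe_sum, coeff_sum, Finset.sum_eq_single w]
      · simp
      · intro u _ huw
        rw [Submodule.coe_smul, coeff_smul, coeff_monomial, if_neg, smul_zero]
        intro he
        have := congrArg (fun d : Fin 2 →₀ ℕ => d 0) he
        simp only [expoTwo_zero] at this
        exact huw (Fin.ext this)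
      · simp
    rw [this, finrank_top, Module.finrank_fin_fun]
  · intro p
    rw [mem_lexIdeal, funext_iff]
    constructor
    · intro hp d hd
      by_cases hdi : d.degree = i
      · rw [hdi] at hd
        rw [eq_expoTwo hdi]
        exact hp ⟨d 0, hd⟩
      · exact p.2.coeff_eq_zero hdi
    · intro hp u
      refine hp _ ?_
      rw [expoTwo_zero, degree_expoTwo (hui u)]
      exact u.2

theorem IsOSeqTwo.isOSequence {δ : ℕ → ℕ} (h : IsOSeqTwo δ) {N : ℕ} (hN : ∀ i, N < i → δ i = 0) :
    IsOSequence K fun i => (δ i : ℤ) := by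
  refine ⟨2, lexIdeal K h, fun p hp i d hd => ?_, finiteDimensional_quotient_of_monomial_mem _ N
    fun d hd e he => ?_, fun i => by rw [hilbFn_lexIdeal]⟩
  · rw [coeff_homogeneousComponent, hp d hd, ite_self]
  · rw [coeff_monomial, if_neg]
    rintro rfl
    rw [hN _ hd] at he
    omega

/-! ### The first half differences of a symmetric catalecticant sequence -/

/-- Dehomogenization of a ternary polynomial along the plane `x₂ = α x₀`. -/
def dehAt (α : K) : MvPolynomial (Fin 3) K →ₐ[K] Polynomial K :=
  aeval ![1, Polynomial.X, Polynomial.C α]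

theorem aeval_eq_homogEval_dehAt (α : K) {i : ℕ} {p : MvPolynomial (Fin 3) K}
    (hp : p.IsHomogeneous i) :
    aeval ![X 0, X 1, C α * X 0] p =
      homogEval (X 0 : MvPolynomial (Fin 3) K) (X 1) i (dehAt α p) := by
  rw [isHomogeneous_eq_sum hp, map_sum, map_sum, map_sum]
  refine Finset.sum_congr rfl fun d _ => ?_
  have hd : d.1 0 + d.1 1 + d.1 2 = i := by
    simpa only [Finsupp.degree_eq_sum, Fin.sum_univ_three] using d.2
  have hdeh : dehAt α (monomial d.1 1) = Polynomial.monomial (d.1 1) (α ^ d.1 2) := by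
    rw [dehAt, aeval_monomial, Finsupp.prod_fintype _ _ (by simp), Fin.prod_univ_three]
    simp [← Polynomial.C_mul_X_pow_eq_monomial, mul_comm]
  rw [map_smul, map_smul, map_smul, hdeh, homogEval_apply, Finset.sum_eq_single (d.1 1)]
  · rw [aeval_monomial, Finsupp.prod_fintype _ _ (by simp), Fin.prod_univ_three,
      show i - d.1 1 = d.1 0 + d.1 2 by omega]
    simp only [Matrix.cons_val, mul_pow, Polynomial.coeff_monomial_same, smul_eq_C_mul, map_one,
      map_pow]
    ring
  · intro b _ hb
    rw [Polynomial.coeff_monomial, if_neg hb.symm, zero_smul]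
  · intro h
    exact absurd (Finset.mem_range.mpr (by omega)) h

theorem dehAt_mem_degreeLT (α : K) {i : ℕ} {p : MvPolynomial (Fin 3) K}
    (hp : p.IsHomogeneous i) : dehAt α p ∈ Polynomial.degreeLT K (i + 1) := by
  rw [isHomogeneous_eq_sum hp, map_sum]
  refine Submodule.sum_mem _ fun d _ => ?_
  rw [map_smul]
  refine Submodule.smul_mem _ _ ?_
  have hd : d.1 0 + d.1 1 + d.1 2 = i := by
    simpa only [Finsupp.degree_eq_sum, Fin.sum_univ_three] using d.2
  rw [dehAt, aeval_monomial, Finsupp.prod_fintype _ _ (by simp), Fin.prod_univ_three,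
    Polynomial.mem_degreeLT]
  simp only [map_one, Matrix.cons_val, one_pow, one_mul, ← Polynomial.C_pow]
  rw [mul_comm]
  refine (Polynomial.degree_C_mul_X_pow_le _ _).trans_lt ?_
  exact_mod_cast (by omega : d.1 1 < i + 1)

theorem dehAt_homogEval (α : K) {i : ℕ} {f : Polynomial K}
    (hf : f ∈ Polynomial.degreeLT K (i + 1)) :
    dehAt α (homogEval (X 0 : MvPolynomial (Fin 3) K) (X 1) i f) = f := by
  rw [homogEval_apply, map_sum]
  have h : f = ∑ k ∈ Finset.range (i + 1), Polynomial.C (f.coeff k) * Polynomial.X ^ k :=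
    f.as_sum_range_C_mul_X_pow' (by
      by_cases h0 : f = 0
      · simp [h0]
      · rw [Polynomial.natDegree_lt_iff_degree_lt h0]
        exact Polynomial.mem_degreeLT.mp hf)
  conv_rhs => rw [h]
  refine Finset.sum_congr rfl fun k _ => ?_
  simp [dehAt, Polynomial.smul_eq_C_mul]

theorem isHomogeneous_homogEval (i : ℕ) (f : Polynomial K) :
    (homogEval (X 0 : MvPolynomial (Fin 3) K) (X 1) i f).IsHomogeneous i := by
  rw [homogEval_apply]
  refine IsHomogeneous.sum _ _ _ fun k hk => ?_
  rw [smul_eq_C_mul]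
  have h : 0 + (1 * (i - k) + 1 * k) = i := by have := Finset.mem_range.mp hk; omega
  have h1 := (isHomogeneous_C (Fin 3) (f.coeff k)).mul
    (((isHomogeneous_X K (0 : Fin 3)).pow (i - k)).mul ((isHomogeneous_X K (1 : Fin 3)).pow k))
  rwa [h] at h1

theorem isHomogeneous_X_sub_C_mul_X (α : K) :
    (X 2 - C α * X 0 : MvPolynomial (Fin 3) K).IsHomogeneous 1 := by
  refine (isHomogeneous_X _ _).sub ?_
  simpa using (isHomogeneous_C (Fin 3) α).mul (isHomogeneous_X K (0 : Fin 3))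

theorem exists_eq_mul_of_dehAt_eq_zero (α : K) {i : ℕ} {p : MvPolynomial (Fin 3) K}
    (hp : p.IsHomogeneous (i + 1)) (h : dehAt α p = 0) :
    ∃ r : MvPolynomial (Fin 3) K, r.IsHomogeneous i ∧ p = (X 2 - C α * X 0) * r := by
  set l : MvPolynomial (Fin 3) K := X 2 - C α * X 0 with hl
  have hlh : l.IsHomogeneous 1 := isHomogeneous_X_sub_C_mul_X α
  have h1 : (Ideal.Quotient.mkₐ K (Ideal.span {l})).comp (aeval ![X 0, X 1, C α * X 0]) =
      Ideal.Quotient.mkₐ K (Ideal.span {l}) := by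
    apply MvPolynomial.algHom_ext
    intro k
    fin_cases k
    · simp
    · simp
    · simp only [AlgHom.comp_apply, aeval_X]
      rw [eq_comm, Ideal.Quotient.mkₐ_eq_mk, Ideal.Quotient.eq]
      exact Ideal.subset_span rfl
  have h2 := AlgHom.congr_fun h1 p
  rw [AlgHom.comp_apply, aeval_eq_homogEval_dehAt α hp, h, map_zero, map_zero, eq_comm,
    Ideal.Quotient.mkₐ_eq_mk, Ideal.Quotient.eq_zero_iff_mem, Ideal.mem_span_singleton] at h2
  obtain ⟨r, rfl⟩ := h2
  refine ⟨homogeneousComponent i r, homogeneousComponent_isHomogeneous i r, ?_⟩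
  rw [← homogeneousComponent_eq_self hp]
  conv_lhs => rw [← sum_homogeneousComponent r]
  rw [Finset.mul_sum, map_sum]
  have hk : ∀ k, homogeneousComponent (i + 1) (l * homogeneousComponent k r) =
      if k = i then l * homogeneousComponent i r else 0 := by
    intro k
    rw [homogeneousComponent_of_mem (hlh.mul (homogeneousComponent_isHomogeneous k r))]
    by_cases hki : k = i
    · rw [if_pos (by omega), if_pos hki, hki]
    · rw [if_neg (by omega), if_neg hki]
  rw [Finset.sum_congr rfl fun k _ => hk k, Finset.sum_ite_eq']
  split_ifs with hr
  · rfl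
  · rw [homogeneousComponent_eq_zero _ _ (by simpa using hr), mul_zero]

theorem exists_dehAt_ne_zero [Infinite K] {i : ℕ} {p : MvPolynomial (Fin 3) K}
    (hp : p.IsHomogeneous i) (h : p ≠ 0) : ∃ α : K, dehAt α p ≠ 0 := by
  by_contra! hc
  have h0 : X 0 * p = 0 := by
    refine MvPolynomial.funext fun x => ?_
    by_cases hx : x 0 = 0
    · simp [hx]
    · have h1 := aeval_eq_homogEval_dehAt (x 2 / x 0) hp
      rw [hc, map_zero] at h1
      have h2 : (eval x) (aeval ![X 0, X 1, C (x 2 / x 0) * X 0] p) = eval x p := by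
        have : ((aeval x : MvPolynomial (Fin 3) K →ₐ[K] K).comp
          (aeval ![X 0, X 1, C (x 2 / x 0) * X 0])) = aeval x := by
          apply MvPolynomial.algHom_ext
          intro k
          fin_cases k <;> simp [hx]
        simpa [aeval_eq_eval] using AlgHom.congr_fun this p
      rw [map_mul, ← h2, h1, map_zero, mul_zero]
  rcases mul_eq_zero.mp h0 with h0 | h0
  · exact X_ne_zero _ h0
  · exact h h0

theorem finrank_map_mkQ_add_finrank {V : Type*} [AddCommGroup V] [Module K V]
    {M N : Submodule K V} [FiniteDimensional K M] (h : N ≤ M) :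
    Module.finrank K (M.map N.mkQ) + Module.finrank K N = Module.finrank K M := by
  have h1 := LinearMap.finrank_range_add_finrank_ker (N.mkQ.domRestrict M)
  rwa [LinearMap.range_domRestrict, LinearMap.ker_domRestrict, Submodule.ker_mkQ,
    (Submodule.comapSubtypeEquivOfLe h).finrank_eq] at h1

/-- The kernel of the catalecticant map, as a space of polynomials. -/
def catKer (φ : MvPolynomial (Fin n) K →ₗ[K] K) (a b : ℕ) :
    Submodule K (MvPolynomial (Fin n) K) :=
  (LinearMap.ker (catMap φ a b)).map (homogeneousSubmodule (Fin n) K a).subtype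

theorem mem_catKer {φ : MvPolynomial (Fin n) K →ₗ[K] K} {a b : ℕ} {p : MvPolynomial (Fin n) K} :
    p ∈ catKer φ a b ↔ p.IsHomogeneous a ∧
      ∀ q : MvPolynomial (Fin n) K, q.IsHomogeneous b → φ (p * q) = 0 := by
  rw [catKer, Submodule.mem_map]
  constructor
  · rintro ⟨p, hp, rfl⟩
    exact ⟨p.2, (catMap_eq_zero_iff φ a b p).mp hp⟩
  · rintro ⟨hp, h⟩
    exact ⟨⟨p, hp⟩, (catMap_eq_zero_iff φ a b ⟨p, hp⟩).mpr h, rfl⟩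

theorem X_mul_mem_catKer {φ : MvPolynomial (Fin n) K →ₗ[K] K} {a b : ℕ}
    {p : MvPolynomial (Fin n) K} (hp : p ∈ catKer φ a (b + 1)) (k : Fin n) :
    X k * p ∈ catKer φ (a + 1) b := by
  rw [mem_catKer] at hp ⊢
  refine ⟨?_, fun q hq => ?_⟩
  · rw [mul_comm]
    exact hp.1.mul (isHomogeneous_X _ _)
  · rw [mul_comm (X k), mul_assoc]
    refine hp.2 _ ?_
    rw [mul_comm]
    exact hq.mul (isHomogeneous_X _ _)

theorem dehAt_X_sub_C_mul_X (α : K) : dehAt α (X 2 - C α * X 0) = 0 := by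
  simp [dehAt]

/-- Restriction of a catalecticant map to the multiples of a linear form. -/
theorem rank_catMatrix_add_finrank (φ : MvPolynomial (Fin 3) K →ₗ[K] K) (α : K) (i b : ℕ) :
    (catMatrix φ (i + 1) b).rank +
      Module.finrank K ((catKer φ (i + 1) b).map (dehAt α).toLinearMap) =
    (catMatrix (φ ∘ₗ LinearMap.mulLeft K (X 2 - C α * X 0)) i b).rank + (i + 2) := by
  set l : MvPolynomial (Fin 3) K := X 2 - C α * X 0 with hl
  set W := (catKer φ (i + 1) b).map (dehAt α).toLinearMap with hW
  set γ := catMap φ (i + 1) b with hγ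
  set N := LinearMap.range (catMap (φ ∘ₗ LinearMap.mulLeft K l) i b) with hN
  have hlr : ∀ r : homogeneousSubmodule (Fin 3) K i,
      (l * (r : MvPolynomial (Fin 3) K)) ∈ homogeneousSubmodule (Fin 3) K (i + 1) := by
    intro r
    rw [mul_comm]
    exact r.2.mul (isHomogeneous_X_sub_C_mul_X α)
  have hγl : ∀ r, catMap (φ ∘ₗ LinearMap.mulLeft K l) i b r = γ ⟨_, hlr r⟩ := by
    intro r
    ext e
    simp [hγ, catMap, mul_assoc]
  have hNγ : N ≤ LinearMap.range γ := by
    rintro _ ⟨r, rfl⟩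
    exact ⟨_, (hγl r).symm⟩
  have hWd : W ≤ Polynomial.degreeLT K (i + 2) := by
    rintro _ ⟨p, hp, rfl⟩
    exact dehAt_mem_degreeLT α (mem_catKer.mp hp).1
  have h1 := finrank_map_mkQ_add_finrank hNγ
  have h2 := finrank_map_mkQ_add_finrank hWd
  rw [← LinearMap.range_comp] at h1
  have hR : Polynomial.degreeLT K (i + 2) = LinearMap.range
      ((dehAt α).toLinearMap ∘ₗ (homogeneousSubmodule (Fin 3) K (i + 1)).subtype) := by
    apply le_antisymm
    · intro f hf
      exact ⟨⟨_, isHomogeneous_homogEval (i + 1) f⟩, dehAt_homogEval α hf⟩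
    · rintro _ ⟨p, rfl⟩
      exact dehAt_mem_degreeLT α p.2
  have h3 : Module.finrank K ((Polynomial.degreeLT K (i + 2)).map W.mkQ) =
      Module.finrank K (LinearMap.range (N.mkQ ∘ₗ γ)) := by
    rw [hR, ← LinearMap.range_comp]
    refine finrank_range_eq_of_ker_eq _ _ fun p => ?_
    simp only [LinearMap.comp_apply, Submodule.mkQ_apply, Submodule.Quotient.mk_eq_zero,
      Submodule.subtype_apply]
    constructor
    · rintro ⟨k, hk, hkp⟩
      have hk' := (mem_catKer.mp hk).1
      obtain ⟨r, hr, hpr⟩ := exists_eq_mul_of_dehAt_eq_zero α (p.2.sub hk') (by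
        rw [map_sub, sub_eq_zero]
        exact hkp.symm)
      refine ⟨⟨r, hr⟩, ?_⟩
      rw [hγl, ← sub_eq_zero, ← map_sub, catMap_eq_zero_iff]
      intro q hq
      have : (l * r - p : MvPolynomial (Fin 3) K) = -k := by
        rw [← hpr]
        ring
      rw [Submodule.coe_sub]
      dsimp only
      rw [this, neg_mul, map_neg, (mem_catKer.mp hk).2 q hq, neg_zero]
    · rintro ⟨r, hr⟩
      rw [hγl, ← sub_eq_zero, ← map_sub, catMap_eq_zero_iff] at hr
      refine ⟨p - l * r, mem_catKer.mpr ⟨p.2.sub (hlr r), fun q hq => ?_⟩, ?_⟩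
      · have := hr q hq
        rw [Submodule.coe_sub] at this
        dsimp only at this
        rw [← neg_sub, neg_mul, map_neg, this, neg_zero]
      · simp [hl, dehAt_X_sub_C_mul_X]
  rw [hγ, finrank_range_catMap] at h1
  rw [hN, finrank_range_catMap, ← h3] at h1
  rw [finrank_degreeLT] at h2
  omega

theorem exists_catKer_threshold [Infinite K] (φ : MvPolynomial (Fin 3) K →ₗ[K] K) (j : ℕ) :
    ∃ (a : ℕ) (α : K), (∀ i < a, i ≤ j → catKer φ i (j - i) = ⊥) ∧
      (a ≤ j → (catKer φ a (j - a)).map (dehAt α).toLinearMap ≠ ⊥) := by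
  by_cases h : ∃ a, a ≤ j ∧ catKer φ a (j - a) ≠ ⊥
  · obtain ⟨p, hp, hp0⟩ := Submodule.exists_mem_ne_zero_of_ne_bot (Nat.find_spec h).2
    obtain ⟨α, hα⟩ := exists_dehAt_ne_zero (mem_catKer.mp hp).1 hp0
    refine ⟨Nat.find h, α, fun i hi hij => ?_, fun _ hbot => hα ?_⟩
    · by_contra hc
      exact Nat.find_min h hi ⟨hij, hc⟩
    · rw [← Submodule.mem_bot K, ← hbot]
      exact Submodule.mem_map_of_mem hp
  · push Not at h
    exact ⟨j + 1, 0, fun i _ hij => h i hij, fun h => by omega⟩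

/-- The first half of the ranks of the catalecticants of a ternary form grows, and the
differences satisfy Macaulay's growth conditions in two variables. -/
theorem isOSeqTwo_rank_catMatrix_sub [Infinite K] (φ : MvPolynomial (Fin 3) K →ₗ[K] K) (j : ℕ)
    (h : ℕ → ℕ) (hh : ∀ i ≤ j, h i = (catMatrix φ i (j - i)).rank) :
    (∀ i, 1 ≤ i → 2 * i ≤ j → h (i - 1) ≤ h i) ∧
      IsOSeqTwo fun i => if i = 0 then 1 else if 2 * i ≤ j then h i - h (i - 1) else 0 := by
  obtain ⟨a, α, hker, ha⟩ := exists_catKer_threshold φ j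
  set l : MvPolynomial (Fin 3) K := X 2 - C α * X 0 with hl
  set W : ℕ → Submodule K (Polynomial K) := fun i =>
    (catKer φ i (j - i)).map (dehAt α).toLinearMap with hW
  obtain ⟨w, hw⟩ : ∃ w : ℕ → ℕ, ∀ i, w i = Module.finrank K (W i) := ⟨_, fun _ => rfl⟩
  obtain ⟨g, hg⟩ : ∃ g : ℕ → ℕ, ∀ i,
      g i = (catMatrix (φ ∘ₗ LinearMap.mulLeft K l) (i - 1) (j - i)).rank := ⟨_, fun _ => rfl⟩
  have hWd : ∀ i, W i ≤ Polynomial.degreeLT K (i + 1) := by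
    rintro i _ ⟨p, hp, rfl⟩
    exact dehAt_mem_degreeLT α (mem_catKer.mp hp).1
  have hwle : ∀ i, w i ≤ i + 1 := by
    intro i
    rw [hw, ← finrank_degreeLT (K := K) (i + 1)]
    exact Submodule.finrank_mono (hWd i)
  have hA : ∀ i, 1 ≤ i → i ≤ j → h i + w i = g i + (i + 1) := by
    intro i hi hij
    obtain ⟨i, rfl⟩ : ∃ s, i = s + 1 := ⟨i - 1, by omega⟩
    rw [hh _ hij, hw, hg]
    exact rank_catMatrix_add_finrank φ α i _
  have hB : ∀ i, 1 ≤ i → i ≤ j → g i = g (j + 1 - i) := by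
    intro i hi hij
    rw [hg, hg, rank_catMatrix_comm, show j + 1 - i - 1 = j - i by omega,
      show j - (j + 1 - i) = i - 1 by omega]
  have hS : ∀ i ≤ j, h i = h (j - i) := by
    intro i hij
    rw [hh _ hij, hh _ (by omega), rank_catMatrix_comm, show j - (j - i) = i by omega]
  have hmul : ∀ i, i + 1 ≤ j → ∀ k, ∀ p ∈ W i, dehAt α (X k) * p ∈ W (i + 1) := by
    rintro i hij k _ ⟨p, hp, rfl⟩
    rw [show j - i = j - (i + 1) + 1 by omega] at hp
    exact ⟨X k * p, X_mul_mem_catKer hp k, by simp⟩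
  have hle : ∀ i, i + 1 ≤ j → W i ≤ W (i + 1) := by
    intro i hij p hp
    simpa [dehAt] using hmul i hij 0 p hp
  have hne : ∀ i, a ≤ i → i ≤ j → W i ≠ ⊥ := by
    intro i hai
    induction i, hai using Nat.le_induction with
    | base => exact ha
    | succ i hai ih =>
      intro hij hbot
      exact ih (by omega) (le_bot_iff.mp ((hle i hij).trans hbot.le))
  have hC : ∀ i, a ≤ i → i + 1 ≤ j → w i + 1 ≤ w (i + 1) := by
    intro i hai hij
    rw [hw, hw]
    refine finrank_lt_finrank_of_X_mul_mem (hWd i) (hWd (i + 1)) (hle i hij) (fun p hp => ?_)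
      (hne i hai (by omega))
    simpa [dehAt] using hmul i hij 1 p hp
  have hw0 : ∀ i < a, i ≤ j → w i = 0 := by
    intro i hia hij
    have hWi : W i = ⊥ := by
      rw [hW]
      dsimp only
      rw [hker i hia hij, Submodule.map_bot]
    rw [hw, hWi, finrank_bot]
  have hE : ∀ i, 1 ≤ i → i < a → i ≤ j → g i = h (i - 1) := by
    intro i hi hia hij
    rw [hg, hh _ (by omega), ← finrank_range_catMap, ← finrank_range_catMap]
    refine finrank_range_eq_of_ker_eq _ _ fun r => ?_
    rw [catMap_eq_zero_iff, catMap_eq_zero_iff]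
    constructor
    · intro hr
      have hm : l * (r : MvPolynomial (Fin 3) K) ∈ catKer φ i (j - i) := by
        refine mem_catKer.mpr ⟨?_, fun q hq => ?_⟩
        · have h1 := (isHomogeneous_X_sub_C_mul_X α).mul r.2
          rwa [show 1 + (i - 1) = i by omega] at h1
        · simpa [mul_assoc] using hr q hq
      rw [hker i hia hij, Submodule.mem_bot] at hm
      have hl0 : l ≠ 0 := by
        intro h0
        have h1 := congrArg (coeff (Finsupp.single 2 1)) h0
        simp [hl, coeff_C_mul, coeff_X, Finsupp.single_left_inj] at h1
      rw [(mul_eq_zero.mp hm).resolve_left hl0]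
      simp
    · intro hr
      have hm : (r : MvPolynomial (Fin 3) K) ∈ catKer φ (i - 1) (j - (i - 1)) :=
        mem_catKer.mpr ⟨r.2, hr⟩
      rw [hker _ (by omega) (by omega), Submodule.mem_bot] at hm
      rw [hm]
      simp
  have hmono : ∀ i k, a ≤ i → i + k ≤ j → w i + k ≤ w (i + k) := by
    intro i k hai
    induction k with
    | zero => simp
    | succ k ih =>
      intro hk
      have := ih (by omega)
      have := hC (i + k) (by omega) (by omega)
      rw [← add_assoc i k 1]
      omega
  have hkey : ∀ i, 1 ≤ i → 2 * i ≤ j → (i < a ∧ h i = h (i - 1) + (i + 1)) ∨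
      (a ≤ i ∧ h i + w i + (j + 2 - i) = h (i - 1) + w (j + 1 - i) + (i + 1) ∧
        w i + (j + 1 - 2 * i) ≤ w (j + 1 - i)) := by
    intro i hi hij
    have h1 := hA i hi (by omega)
    rcases lt_or_ge i a with hia | hia
    · left
      have := hE i hi hia (by omega)
      have := hw0 i hia (by omega)
      exact ⟨hia, by omega⟩
    · right
      have h2 := hA (j + 1 - i) (by omega) (by omega)
      have h3 := hB i hi (by omega)
      have h4 := hS (i - 1) (by omega)
      rw [show j - (i - 1) = j + 1 - i by omega] at h4
      have h5 := hmono i (j + 1 - 2 * i) hia (by omega)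
      rw [show i + (j + 1 - 2 * i) = j + 1 - i by omega] at h5
      exact ⟨hia, by omega, h5⟩
  refine ⟨fun i hi hij => ?_, fun i => ?_, fun i hi => ?_⟩
  · rcases hkey i hi hij with ⟨-, h1⟩ | ⟨-, h1, h2⟩ <;> omega
  · dsimp only
    split_ifs with h1 h2
    · omega
    · have := hwle (j + 1 - i)
      rcases hkey i (by omega) h2 with ⟨-, h1⟩ | ⟨-, h1, h2⟩ <;> omega
    · omega
  · dsimp only at hi ⊢
    rw [if_neg (Nat.succ_ne_zero i), Nat.add_sub_cancel]
    by_cases h2 : 2 * (i + 1) ≤ j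
    · have hi0 : i ≠ 0 := by
        rintro rfl
        simp at hi
      rw [if_neg hi0, if_pos (by omega)] at hi
      rw [if_pos h2, if_neg hi0, if_pos (by omega)]
      have h3 := hkey (i + 1) (by omega) h2
      have h4 := hkey i (by omega) (by omega)
      rw [Nat.add_sub_cancel, show j + 1 - (i + 1) = j - i by omega] at h3
      rcases h4 with ⟨-, h4⟩ | ⟨hai, h4, h4'⟩
      · omega
      have h5 := hC i hai (by omega)
      have h6 := hC (j - i) (by omega) (by omega)
      rw [show j - i + 1 = j + 1 - i by omega] at h6
      rcases h3 with ⟨h3, -⟩ | ⟨-, h3, h3'⟩ <;> omega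
    · rw [if_neg h2]
      exact Nat.zero_le _

theorem exists_catMatrix_map (L : Type*) [Field L] [Algebra K L]
    (φ : MvPolynomial (Fin n) K →ₗ[K] K) :
    ∃ φL : MvPolynomial (Fin n) L →ₗ[L] L,
      ∀ a b, catMatrix φL a b = (catMatrix φ a b).map (algebraMap K L) := by
  refine ⟨(basisMonomials (Fin n) L).constr L fun d => algebraMap K L (φ (monomial d 1)),
    fun a b => ?_⟩
  ext d e
  rw [Matrix.map_apply, catMatrix, catMatrix, monomial_mul, monomial_mul, mul_one, mul_one]
  have h := (basisMonomials (Fin n) L).constr_basis L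
    (fun d => algebraMap K L (φ (monomial d 1))) (d.1 + e.1)
  rwa [coe_basisMonomials] at h

/-- The first half difference sequence of the Hilbert function of a graded Artinian Gorenstein
algebra of codimension three is an O-sequence. -/
theorem IsAG.isOSequence {I : Ideal (MvPolynomial (Fin 3) K)} (hI : IsAG I) {T : ℕ → ℕ} {j : ℕ}
    (h0 : T 0 = 1) (hsym : ∀ i ≤ j, T (j - i) = T i) (hvan : ∀ i, j < i → T i = 0)
    (hT : ∀ i, hilbFn I i = T i) :
    IsOSequence K (fun i =>
      if i = 0 then 1 else if 2 * i ≤ j then (T i : ℤ) - (T (i - 1) : ℤ) else 0) := by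
  have hj : hilbFn I j ≠ 0 := by
    have := hsym j le_rfl
    rw [Nat.sub_self, h0] at this
    rw [hT]
    omega
  obtain ⟨φ, hφ⟩ := hI.exists_functional hj fun i hi => by rw [hT, hvan i hi]
  obtain ⟨φL, hL⟩ := exists_catMatrix_map (AlgebraicClosure K) φ
  obtain ⟨hmono, hO⟩ := isOSeqTwo_rank_catMatrix_sub φL j T fun i hi => by
    rw [hL, rank_map_algebraMap, ← hT]
    exact hilbFn_eq_rank_catMatrix I φ i (j - i) (hφ i (j - i) (by omega))
  convert hO.isOSequence (K := K) (N := j) fun i hi => ?_ using 2 with i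
  · split_ifs with h1 h2
    · rfl
    · rw [Nat.cast_sub (hmono i (by omega) h2)]
    · rfl
  · rw [if_neg (by omega), if_neg (by omega)]

/-! ### Construction of functionals with prescribed rank differences -/

open Polynomial in
/-- Bivariate polynomials of total degree less than `k`. -/
def totalDegLT (K : Type*) [Field K] (k : ℕ) : Submodule K K[X][X] where
  carrier := {f | ∀ u v, k ≤ u + v → (f.coeff u).coeff v = 0}
  zero_mem' := by simp
  add_mem' hf hg u v h := by simp [hf u v h, hg u v h]
  smul_mem' c f hf u v h := by simp [hf u v h]

theorem totalDegLT_mono {k l : ℕ} (h : k ≤ l) : totalDegLT K k ≤ totalDegLT K l :=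
  fun _ hf u v huv => hf u v (h.trans huv)

theorem mul_mem_totalDegLT {a b : ℕ} {f g : Polynomial (Polynomial K)}
    (hf : f ∈ totalDegLT K (a + 1)) (hg : g ∈ totalDegLT K b) : f * g ∈ totalDegLT K (a + b) := by
  intro u v huv
  rw [Polynomial.coeff_mul, Polynomial.finsetSum_coeff]
  refine Finset.sum_eq_zero fun x hx => ?_
  rw [Polynomial.coeff_mul]
  refine Finset.sum_eq_zero fun y hy => ?_
  rw [Finset.HasAntidiagonal.mem_antidiagonal] at hx hy
  rcases le_or_gt (a + 1) (x.1 + y.1) with h | h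
  · rw [hf _ _ h, zero_mul]
  · rw [hg _ _ (by omega), mul_zero]

theorem C_mem_totalDegLT {k : ℕ} {p : Polynomial K} (hp : p ∈ Polynomial.degreeLT K k) :
    Polynomial.C p ∈ totalDegLT K k := by
  rw [Polynomial.mem_degreeLT, Polynomial.degree_lt_iff_coeff_zero] at hp
  intro u v huv
  rw [Polynomial.coeff_C]
  split_ifs with hu
  · exact hp v (by omega)
  · simp

theorem C_X_pow_mem_totalDegLT (k : ℕ) :
    Polynomial.C (Polynomial.X ^ k : Polynomial K) ∈ totalDegLT K (k + 1) := by
  refine C_mem_totalDegLT ?_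
  rw [Polynomial.mem_degreeLT, Polynomial.degree_X_pow]
  exact_mod_cast Nat.lt_succ_self k

theorem X_mul_mem_totalDegLT {k : ℕ} {f : Polynomial (Polynomial K)} (hf : f ∈ totalDegLT K k) :
    Polynomial.X * f ∈ totalDegLT K (k + 1) := by
  intro u v huv
  rcases u with _ | u
  · simp
  · rw [Polynomial.coeff_X_mul]
    exact hf u v (by omega)

theorem exists_eq_C_add_X_mul {k : ℕ} {f : Polynomial (Polynomial K)}
    (hf : f ∈ totalDegLT K (k + 1)) : ∃ p ∈ Polynomial.degreeLT K (k + 1),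
      ∃ r ∈ totalDegLT K k, f = Polynomial.C p + Polynomial.X * r := by
  refine ⟨f.coeff 0, ?_, f.divX, fun u v huv => ?_, ?_⟩
  · rw [Polynomial.mem_degreeLT, Polynomial.degree_lt_iff_coeff_zero]
    exact fun v hv => hf 0 v (by omega)
  · rw [Polynomial.coeff_divX]
    exact hf _ v (by omega)
  · rw [add_comm, Polynomial.X_mul_divX_add]

/-- The annihilator of a functional on bivariate polynomials. -/
def annTwo (φ : Polynomial (Polynomial K) →ₗ[K] K) : Submodule K (Polynomial (Polynomial K)) where
  carrier := {f | ∀ q, φ (f * q) = 0}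
  zero_mem' := by simp
  add_mem' hf hg q := by rw [add_mul, map_add, hf, hg, add_zero]
  smul_mem' c f hf q := by rw [smul_mul_assoc, map_smul, hf, smul_zero]

theorem mem_annTwo {φ : Polynomial (Polynomial K) →ₗ[K] K} {f : Polynomial (Polynomial K)} :
    f ∈ annTwo φ ↔ ∀ q, φ (f * q) = 0 := Iff.rfl

theorem mul_mem_annTwo {φ : Polynomial (Polynomial K) →ₗ[K] K} {f : Polynomial (Polynomial K)}
    (hf : f ∈ annTwo φ) (g : Polynomial (Polynomial K)) : f * g ∈ annTwo φ := by
  intro q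
  rw [mul_assoc]
  exact hf _

/-- The polynomials of total degree less than `k` modulo the annihilator of `φ`. -/
def truncQuot (φ : Polynomial (Polynomial K) →ₗ[K] K) (k : ℕ) :
    Submodule K (Polynomial (Polynomial K) ⧸ annTwo φ) :=
  (totalDegLT K k).map (annTwo φ).mkQ

/-- `G` and `X * G'` generate a complete intersection annihilated by `φ`, with leading forms in
general position with respect to `X`. -/
structure IsCIPair (φ : Polynomial (Polynomial K) →ₗ[K] K) (G G' : Polynomial (Polynomial K))
    (n : ℕ) : Prop where
  left_mem : G ∈ annTwo φ
  right_mem : Polynomial.X * G' ∈ annTwo φ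
  notMem : Polynomial.C (Polynomial.X ^ (n - 1)) * G' ∉ annTwo φ
  exists_eq : ∃ H ∈ totalDegLT K n, G = Polynomial.C (Polynomial.X ^ n) + Polynomial.X * H
  right_mem_totalDegLT : G' ∈ totalDegLT K n
  exists_sub_mem : ∀ g, ∃ g' ∈ totalDegLT K n, g - g' ∈ annTwo φ

theorem exists_eq_X_pow_mul_add (p : Polynomial K) (n : ℕ) :
    ∃ p₁, ∃ p₀ ∈ Polynomial.degreeLT K n, p = Polynomial.X ^ n * p₁ + p₀ := by
  refine ⟨p /ₘ Polynomial.X ^ n, p %ₘ Polynomial.X ^ n, ?_, ?_⟩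
  · rw [Polynomial.mem_degreeLT]
    refine (Polynomial.degree_modByMonic_lt _ (Polynomial.monic_X_pow n)).trans_le ?_
    rw [Polynomial.degree_X_pow]
  · rw [add_comm, Polynomial.modByMonic_add_div]

/-- Division of a constant in the outer variable by `G = C (X ^ n) + X * H`. -/
theorem exists_C_sub_mem {φ : Polynomial (Polynomial K) →ₗ[K] K} {G H : Polynomial (Polynomial K)}
    {n : ℕ} (hG : G ∈ annTwo φ)
    (hH : G = Polynomial.C (Polynomial.X ^ n) + Polynomial.X * H) (p : Polynomial K) :
    ∃ p₁, ∃ p₀ ∈ Polynomial.degreeLT K n, p = Polynomial.X ^ n * p₁ + p₀ ∧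
      Polynomial.C p - (Polynomial.C p₀ - Polynomial.X * (H * Polynomial.C p₁)) ∈ annTwo φ := by
  obtain ⟨p₁, p₀, hp₀, hp⟩ := exists_eq_X_pow_mul_add p n
  refine ⟨p₁, p₀, hp₀, hp, ?_⟩
  have h : Polynomial.C p - (Polynomial.C p₀ - Polynomial.X * (H * Polynomial.C p₁)) =
      G * Polynomial.C p₁ := by
    rw [hH, hp, map_add, map_mul]
    ring
  rw [h]
  exact mul_mem_annTwo hG _

theorem IsCIPair.eq_zero {φ : Polynomial (Polynomial K) →ₗ[K] K} {G G' : Polynomial (Polynomial K)}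
    {n : ℕ} (h : IsCIPair φ G G' n) (hn : 1 ≤ n) {p : Polynomial K}
    (hp : p ∈ Polynomial.degreeLT K n) {r : Polynomial (Polynomial K)}
    (hr : Polynomial.C p + Polynomial.X * r ∈ annTwo φ) : p = 0 := by
  by_contra hp0
  obtain ⟨H, -, hH⟩ := h.exists_eq
  obtain ⟨u, hu, hu0⟩ := Polynomial.exists_eq_pow_rootMultiplicity_mul_and_not_dvd p hp0 0
  set v := p.rootMultiplicity 0 with hv
  rw [map_zero, sub_zero] at hu hu0
  have hvn : v < n := by
    have h1 := Polynomial.mem_degreeLT.mp hp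
    have hune : u ≠ 0 := by
      rintro rfl
      exact hu0 (dvd_zero _)
    rw [hu, Polynomial.degree_mul, Polynomial.degree_X_pow, Polynomial.degree_eq_natDegree hune]
      at h1
    norm_cast at h1
    omega
  rw [Polynomial.X_dvd_iff] at hu0
  have hY : Polynomial.C (Polynomial.X ^ n : Polynomial K) * G' ∈ annTwo φ := by
    have h1 : Polynomial.C (Polynomial.X ^ n : Polynomial K) * G' =
        G * G' - (Polynomial.X * G') * H := by
      rw [hH]
      ring
    rw [h1]
    exact sub_mem (mul_mem_annTwo h.left_mem _) (mul_mem_annTwo h.right_mem _)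
  have h2 := mul_mem_annTwo hr (Polynomial.C (Polynomial.X ^ (n - 1 - v)) * G')
  have h3 := mul_mem_annTwo h.right_mem (r * Polynomial.C (Polynomial.X ^ (n - 1 - v)))
  have h4 := mul_mem_annTwo hY (Polynomial.C u.divX)
  have h5 : u.coeff 0 • (Polynomial.C (Polynomial.X ^ (n - 1)) * G') ∈ annTwo φ := by
    have h6 := sub_mem (sub_mem h2 h3) h4
    convert h6 using 1
    have h7 : p * Polynomial.X ^ (n - 1 - v) =
        u.coeff 0 • Polynomial.X ^ (n - 1) + Polynomial.X ^ n * u.divX := by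
      have h8 : u = Polynomial.C (u.coeff 0) + Polynomial.X * u.divX := by
        rw [add_comm, Polynomial.X_mul_divX_add]
      rw [Polynomial.smul_eq_C_mul]
      calc p * Polynomial.X ^ (n - 1 - v)
          = Polynomial.X ^ (v + (n - 1 - v)) * u := by rw [pow_add, hu]; ring
        _ = Polynomial.X ^ (n - 1) * (Polynomial.C (u.coeff 0) + Polynomial.X * u.divX) := by
            rw [show v + (n - 1 - v) = n - 1 by omega, ← h8]
        _ = Polynomial.C (u.coeff 0) * Polynomial.X ^ (n - 1) +
              Polynomial.X ^ (n - 1 + 1) * u.divX := by ring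
        _ = _ := by rw [show n - 1 + 1 = n by omega]
    have h9 := congrArg (fun z => Polynomial.C z * G') h7
    simp only [map_add, map_mul, Polynomial.smul_eq_C_mul] at h9
    have h10 : u.coeff 0 • (Polynomial.C (Polynomial.X ^ (n - 1)) * G') =
        Polynomial.C (Polynomial.C (u.coeff 0)) * Polynomial.C (Polynomial.X ^ (n - 1)) * G' := by
      ext
      simp [mul_assoc, Polynomial.coeff_C_mul]
    rw [h10]
    linear_combination -h9
  exact h.notMem ((Submodule.smul_mem_iff _ hu0).mp h5)

instance finiteDimensional_totalDegLT (k : ℕ) : FiniteDimensional K (totalDegLT K k) := by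
  induction k with
  | zero =>
    have h : totalDegLT K 0 = ⊥ := by
      rw [eq_bot_iff]
      intro f hf
      rw [Submodule.mem_bot]
      ext u v
      simpa using hf u v (Nat.zero_le _)
    rw [h]
    infer_instance
  | succ k ih =>
    let f : Polynomial.degreeLT K (k + 1) × totalDegLT K k →ₗ[K] Polynomial (Polynomial K) :=
      (((Algebra.linearMap (Polynomial K) (Polynomial (Polynomial K))).restrictScalars K) ∘ₗ
        (Polynomial.degreeLT K (k + 1)).subtype).coprod
        (LinearMap.mulLeft K Polynomial.X ∘ₗ (totalDegLT K k).subtype)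
    refine Submodule.finiteDimensional_of_le (S₂ := LinearMap.range f) fun g hg => ?_
    obtain ⟨p, hp, r, hr, rfl⟩ := exists_eq_C_add_X_mul hg
    exact ⟨(⟨p, hp⟩, ⟨r, hr⟩), by simp [f]⟩

theorem X_mul_mem_annTwo_iff {φ φ' : Polynomial (Polynomial K) →ₗ[K] K}
    (hφ : ∀ r, φ (Polynomial.X * r) = φ' r) {r : Polynomial (Polynomial K)} :
    Polynomial.X * r ∈ annTwo φ ↔ r ∈ annTwo φ' := by
  simp only [mem_annTwo, mul_assoc, hφ]

theorem IsCIPair.finrank_truncQuot_succ {φ φ' : Polynomial (Polynomial K) →ₗ[K] K}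
    {G G' : Polynomial (Polynomial K)} {n : ℕ} (h : IsCIPair φ G G' n) (hn : 1 ≤ n)
    (hφ : ∀ r, φ (Polynomial.X * r) = φ' r) (k : ℕ) :
    Module.finrank K (truncQuot φ (k + 1)) =
      Module.finrank K (truncQuot φ' k) + min (k + 1) n := by
  let D := Polynomial.degreeLT K (min (k + 1) n)
  let E := totalDegLT K k
  let f : E × D →ₗ[K] Polynomial (Polynomial K) :=
    (LinearMap.mulLeft K Polynomial.X ∘ₗ E.subtype).coprod
      (((Algebra.linearMap (Polynomial K) (Polynomial (Polynomial K))).restrictScalars K) ∘ₗ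
        D.subtype)
  have hf : ∀ x, f x =
      Polynomial.C (x.2 : Polynomial K) +
        Polynomial.X * (x.1 : Polynomial (Polynomial K)) := by
    intro x
    simp [f, add_comm]
  obtain ⟨s, hs, hs0⟩ : ∃ s : E →ₗ[K] truncQuot φ' k, Function.Surjective s ∧
      ∀ r : E, s r = 0 ↔ (r : Polynomial (Polynomial K)) ∈ annTwo φ' := by
    refine ⟨(annTwo φ').mkQ.submoduleMap E, LinearMap.submoduleMap_surjective _ _, fun r => ?_⟩
    rw [← Submodule.Quotient.mk_eq_zero (annTwo φ')]
    exact Subtype.ext_iff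
  let g : E × D →ₗ[K] (truncQuot φ' k) × D := s.prodMap LinearMap.id
  have hg : LinearMap.range g = ⊤ := by
    rw [LinearMap.range_eq_top]
    exact hs.prodMap Function.surjective_id
  have hker : ∀ x, ((annTwo φ).mkQ ∘ₗ f) x = 0 ↔ g x = 0 := by
    rintro ⟨r, p⟩
    rw [LinearMap.comp_apply, hf, Submodule.mkQ_apply, Submodule.Quotient.mk_eq_zero]
    have hg0 : g (r, p) = 0 ↔ (r : Polynomial (Polynomial K)) ∈ annTwo φ' ∧ p = 0 := by
      rw [LinearMap.prodMap_apply, Prod.mk_eq_zero, hs0, LinearMap.id_apply]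
    rw [hg0, ← X_mul_mem_annTwo_iff hφ]
    constructor
    · intro hm
      have hp0 := h.eq_zero hn (Polynomial.degreeLT_mono (min_le_right _ _) p.2) hm
      refine ⟨?_, Subtype.ext hp0⟩
      dsimp only at hm
      rwa [hp0, map_zero, zero_add] at hm
    · rintro ⟨hm, rfl⟩
      simpa using hm
  have hrange : LinearMap.range ((annTwo φ).mkQ ∘ₗ f) = truncQuot φ (k + 1) := by
    apply le_antisymm
    · rintro _ ⟨⟨r, p⟩, rfl⟩
      refine ⟨_, ?_, rfl⟩
      rw [hf]
      exact add_mem (C_mem_totalDegLT (Polynomial.degreeLT_mono (min_le_left _ _) p.2))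
        (X_mul_mem_totalDegLT r.2)
    · rintro _ ⟨q, hq, rfl⟩
      obtain ⟨p, hp, r, hr, rfl⟩ := exists_eq_C_add_X_mul hq
      obtain ⟨H, hHmem, hH⟩ := h.exists_eq
      rcases le_or_gt (k + 1) n with hkn | hkn
      · refine ⟨(⟨r, hr⟩, ⟨p, ?_⟩), ?_⟩
        · rwa [← min_eq_left hkn] at hp
        · rw [LinearMap.comp_apply, hf]
      · obtain ⟨p₁, p₀, hp₀, hpp, hmem⟩ := exists_C_sub_mem h.left_mem hH p
        have hp₁ : p₁ ∈ Polynomial.degreeLT K (k + 1 - n) := by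
          rw [Polynomial.mem_degreeLT, Polynomial.degree_lt_iff_coeff_zero] at hp hp₀ ⊢
          intro m hm
          have h1 := hp (n + m) (by omega)
          rwa [hpp, Polynomial.coeff_add, hp₀ _ (Nat.le_add_right _ _), add_zero, add_comm n m,
            Polynomial.coeff_X_pow_mul] at h1
        have hr' : r - H * Polynomial.C p₁ ∈ totalDegLT K k := by
          refine sub_mem hr ?_
          have h1 := C_mem_totalDegLT hp₁
          rw [show k + 1 - n = k - n + 1 by omega] at h1
          have h2 := mul_mem_totalDegLT h1 hHmem
          rwa [show k - n + n = k by omega, mul_comm] at h2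
        refine ⟨(⟨_, hr'⟩, ⟨p₀, ?_⟩), ?_⟩
        · rwa [← min_eq_right hkn.le] at hp₀
        · rw [LinearMap.comp_apply, hf, eq_comm, ← sub_eq_zero, ← map_sub, Submodule.mkQ_apply,
            Submodule.Quotient.mk_eq_zero]
          convert hmem using 1
          ring
  have hfd : FiniteDimensional K (truncQuot φ' k) := by
    rw [truncQuot]
    infer_instance
  have h1 := finrank_range_eq_of_ker_eq (V := E × D) (W₁ := Polynomial (Polynomial K) ⧸ annTwo φ)
    (W₂ := truncQuot φ' k × D) ((annTwo φ).mkQ ∘ₗ f) g hker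
  rw [hrange, hg, finrank_top, Module.finrank_prod, finrank_degreeLT] at h1
  exact h1

theorem truncQuot_zero (φ : Polynomial (Polynomial K) →ₗ[K] K) : truncQuot φ 0 = ⊥ := by
  rw [truncQuot, eq_bot_iff]
  rintro _ ⟨f, hf, rfl⟩
  have : f = 0 := by
    ext u v
    simpa using hf u v (Nat.zero_le _)
  simp [this]

theorem finrank_truncQuot_of_eq_zero (k : ℕ) :
    Module.finrank K (truncQuot (0 : Polynomial (Polynomial K) →ₗ[K] K) k) = 0 := by
  have h : truncQuot (0 : Polynomial (Polynomial K) →ₗ[K] K) k = ⊥ := by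
    rw [truncQuot, eq_bot_iff]
    rintro _ ⟨f, -, rfl⟩
    rw [Submodule.mem_bot, Submodule.mkQ_apply, Submodule.Quotient.mk_eq_zero]
    exact fun q => by simp
  rw [h, finrank_bot]

/-- Extension of a functional along multiplication by the outer variable. -/
theorem exists_functional_extension (φ' : Polynomial (Polynomial K) →ₗ[K] K)
    (ψ : Polynomial K →ₗ[K] K) : ∃ φ : Polynomial (Polynomial K) →ₗ[K] K,
      (∀ r, φ (Polynomial.X * r) = φ' r) ∧ ∀ p, φ (Polynomial.C p) = ψ p := by
  refine ⟨{ toFun := fun f => φ' f.divX + ψ (f.coeff 0), map_add' := ?_, map_smul' := ?_ },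
    fun r => ?_, fun p => ?_⟩
  · intro f g
    rw [Polynomial.divX_add, Polynomial.coeff_add, map_add, map_add]
    ring
  · intro c f
    have : (c • f).divX = c • f.divX := by
      ext
      simp [Polynomial.coeff_divX]
    rw [this, Polynomial.coeff_smul, map_smul, map_smul, RingHom.id_apply, smul_add]
  · have : (Polynomial.X * r).divX = r := by
      ext
      simp [Polynomial.coeff_divX]
    simp [this]
  · simp

theorem IsCIPair.of_extension {φ φ' : Polynomial (Polynomial K) →ₗ[K] K}
    {G G' : Polynomial (Polynomial K)} {n m : ℕ} (hmn : m + 1 ≤ n)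
    (hφ : ∀ r, φ (Polynomial.X * r) = φ' r) (hG : G ∈ annTwo φ) (hG' : G' ∈ annTwo φ')
    (hne : Polynomial.C (Polynomial.X ^ (n - 1)) * G' ∉ annTwo φ)
    (hH : ∃ H ∈ totalDegLT K n, G = Polynomial.C (Polynomial.X ^ n) + Polynomial.X * H)
    (hdeg : G' ∈ totalDegLT K n) (hrep : ∀ g, ∃ g' ∈ totalDegLT K m, g - g' ∈ annTwo φ') :
    IsCIPair φ G G' n := by
  refine ⟨hG, (X_mul_mem_annTwo_iff hφ).mpr hG', hne, hH, hdeg, fun g => ?_⟩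
  obtain ⟨H, -, hH⟩ := hH
  obtain ⟨p₁, p₀, hp₀, -, hmem⟩ := exists_C_sub_mem hG hH (g.coeff 0)
  obtain ⟨r, hr, hr'⟩ := hrep (g.divX - H * Polynomial.C p₁)
  refine ⟨Polynomial.C p₀ + Polynomial.X * r, add_mem (C_mem_totalDegLT hp₀)
    (totalDegLT_mono hmn (X_mul_mem_totalDegLT hr)), ?_⟩
  have h1 := add_mem hmem ((X_mul_mem_annTwo_iff hφ).mpr hr')
  convert h1 using 1
  conv_lhs => rw [← Polynomial.X_mul_divX_add g]
  ring

theorem exists_isCIPair_base {n : ℕ} (hn : 1 ≤ n) :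
    ∃ (φ : Polynomial (Polynomial K) →ₗ[K] K) (G G' : Polynomial (Polynomial K)),
      IsCIPair φ G G' n ∧ ∀ r, φ (Polynomial.X * r) = 0 := by
  obtain ⟨φ, h1, h2⟩ := exists_functional_extension 0 (Polynomial.lcoeff K (n - 1))
  refine ⟨φ, Polynomial.C (Polynomial.X ^ n), 1, ?_, h1⟩
  refine IsCIPair.of_extension (m := 0) hn h1 (fun q => ?_) (fun q => rfl) (fun h => ?_)
    ⟨0, zero_mem _, by simp⟩ ?_ fun g => ⟨0, zero_mem _, fun q => rfl⟩
  · rw [← Polynomial.X_mul_divX_add q, mul_add, mul_left_comm, map_add, h1, ← Polynomial.C_mul,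
      h2, LinearMap.zero_apply, zero_add, Polynomial.lcoeff_apply, Polynomial.coeff_X_pow_mul',
      if_neg (by omega)]
  · have := h 1
    rw [mul_one, mul_one, h2] at this
    simp at this
  · rw [← map_one Polynomial.C]
    refine totalDegLT_mono hn ?_
    simpa using C_X_pow_mem_totalDegLT (K := K) 0

theorem IsCIPair.exists_step {φ' : Polynomial (Polynomial K) →ₗ[K] K}
    {G' G'' : Polynomial (Polynomial K)} {m : ℕ} (h : IsCIPair φ' G' G'' m) (hm : 1 ≤ m) {n : ℕ}
    (hmn : m + 1 ≤ n) :
    ∃ (φ : Polynomial (Polynomial K) →ₗ[K] K) (G : Polynomial (Polynomial K)),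
      IsCIPair φ G G' n ∧ ∀ r, φ (Polynomial.X * r) = φ' r := by
  obtain ⟨H', hH', hG'⟩ := h.exists_eq
  obtain ⟨d, rfl⟩ : ∃ d, n = d + m := ⟨n - m, by omega⟩
  set Y : Polynomial (Polynomial K) := Polynomial.C (Polynomial.X ^ d) with hY
  have hYd : Y ∈ totalDegLT K (d + 1) := C_X_pow_mem_totalDegLT d
  set H := Y * H' - G'' with hH
  have hHmem : H ∈ totalDegLT K (d + m) :=
    sub_mem (mul_mem_totalDegLT hYd hH') (totalDegLT_mono (by omega) h.right_mem_totalDegLT)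
  set G := Y * G' - Polynomial.X * G'' with hG
  have hGH : G = Polynomial.C (Polynomial.X ^ (d + m)) + Polynomial.X * H := by
    rw [hG, hG', hH, pow_add, map_mul]
    ring
  obtain ⟨ρ, hρ⟩ := LinearMap.exists_leftInverse_of_injective
    (LinearMap.mulLeft K (Polynomial.X ^ (d + m) : Polynomial K))
    (LinearMap.ker_eq_bot.mpr fun p q hpq => mul_left_cancel₀ (pow_ne_zero _ Polynomial.X_ne_zero) hpq)
  obtain ⟨φ, h1, h2⟩ := exists_functional_extension φ' (-(φ' ∘ₗ LinearMap.mulLeft K H ∘ₗ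
    ((Algebra.linearMap (Polynomial K) (Polynomial (Polynomial K))).restrictScalars K)) ∘ₗ ρ)
  have hGmem : G ∈ annTwo φ := by
    intro q
    rw [← Polynomial.X_mul_divX_add q, mul_add, mul_left_comm, map_add, h1]
    have h3 : φ' (G * q.divX) = 0 := by
      rw [hG, sub_mul, map_sub, mul_assoc, mul_left_comm, h.left_mem, h.right_mem, sub_zero]
    have h4 : ρ (Polynomial.X ^ (d + m) * q.coeff 0) = q.coeff 0 := LinearMap.congr_fun hρ _
    rw [h3, zero_add, hGH, add_mul, mul_assoc, map_add, h1, ← map_mul, h2]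
    simp [h4]
  refine ⟨φ, G, IsCIPair.of_extension hmn h1 hGmem h.left_mem (fun hc => h.notMem ?_)
    ⟨H, hHmem, hGH⟩ ?_ h.exists_sub_mem, h1⟩
  · rw [← X_mul_mem_annTwo_iff h1]
    have h3 := mul_mem_annTwo hGmem (Polynomial.C (Polynomial.X ^ (m - 1)))
    have h4 := sub_mem hc h3
    convert h4 using 1
    rw [show d + m - 1 = d + (m - 1) by omega, pow_add, map_mul, hG, hY]
    ring
  · rw [hG']
    exact totalDegLT_mono hmn (add_mem (C_X_pow_mem_totalDegLT m) (X_mul_mem_totalDegLT hH'))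

theorem IsOSeqTwo.exists_pos_iff_lt {δ : ℕ → ℕ} (h : IsOSeqTwo δ) (h0 : ∃ N, δ N = 0) :
    ∃ n, ∀ i, 0 < δ i ↔ i < n := by
  refine ⟨Nat.find h0, fun i => ⟨fun hi => ?_, fun hi => Nat.pos_of_ne_zero (Nat.find_min h0 hi)⟩⟩
  by_contra! hc
  have hz : δ i = 0 := by
    induction i, hc using Nat.le_induction with
    | base => exact Nat.find_spec h0
    | succ i _ ih =>
      by_contra hne
      have hi0 : δ i = 0 := by
        by_contra hne'
        exact hne' (ih (Nat.pos_of_ne_zero hne'))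
      have := h.2 i (by omega)
      omega
  omega

theorem IsOSeqTwo.sub_one {δ : ℕ → ℕ} (h : IsOSeqTwo δ) : IsOSeqTwo fun i => δ (i + 1) - 1 := by
  refine ⟨fun i => ?_, fun i hi => ?_⟩
  · have := h.1 (i + 1)
    dsimp only
    omega
  · have := h.2 (i + 1)
    dsimp only at hi ⊢
    omega

theorem IsOSeqTwo.sum_range_succ {δ : ℕ → ℕ} (h : IsOSeqTwo δ) {n : ℕ}
    (hn : ∀ i, 0 < δ i ↔ i < n) (h1 : 1 ≤ n) (k : ℕ) :
    ∑ i ∈ Finset.range (k + 1), δ i =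
      ∑ i ∈ Finset.range k, (δ (i + 1) - 1) + min (k + 1) n := by
  induction k with
  | zero =>
    have := h.1 0
    have := (hn 0).mpr (by omega)
    simp only [zero_add, Finset.sum_range_one, Finset.range_zero, Finset.sum_empty]
    omega
  | succ k ih =>
    rw [Finset.sum_range_succ, ih, Finset.sum_range_succ]
    have := hn (k + 1)
    omega

theorem exists_isCIPair {n : ℕ} (hn : 1 ≤ n) {δ : ℕ → ℕ} (h : IsOSeqTwo δ)
    (hδ : ∀ i, 0 < δ i ↔ i < n) :
    ∃ (φ : Polynomial (Polynomial K) →ₗ[K] K) (G G' : Polynomial (Polynomial K)),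
      IsCIPair φ G G' n ∧
        ∀ k, Module.finrank K (truncQuot φ k) = ∑ i ∈ Finset.range k, δ i := by
  induction n using Nat.strong_induction_on generalizing δ with
  | _ n ih =>
  have hz : δ n = 0 := by
    have := hδ n
    omega
  obtain ⟨m, hm⟩ := h.sub_one.exists_pos_iff_lt ⟨n - 1, by
    rw [Nat.sub_add_cancel hn, hz]⟩
  have hmn : m + 1 ≤ n := by
    have := hm (n - 1)
    rw [Nat.sub_add_cancel hn, hz] at this
    omega
  rcases Nat.eq_zero_or_pos m with rfl | hm0
  · obtain ⟨φ, G, G', hP, hφ⟩ := exists_isCIPair_base (K := K) hn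
    refine ⟨φ, G, G', hP, fun k => ?_⟩
    rcases k with _ | k
    · rw [truncQuot_zero, finrank_bot, Finset.sum_range_zero]
    · rw [hP.finrank_truncQuot_succ hn (φ' := 0) hφ, finrank_truncQuot_of_eq_zero,
        h.sum_range_succ hδ hn, Finset.sum_eq_zero]
      intro i _
      have := hm i
      omega
  · obtain ⟨φ', G', G'', hP', hV⟩ := ih m (by omega) hm0 h.sub_one hm
    obtain ⟨φ, G, hP, hφ⟩ := hP'.exists_step hm0 hmn
    refine ⟨φ, G, G', hP, fun k => ?_⟩
    rcases k with _ | k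
    · rw [truncQuot_zero, finrank_bot, Finset.sum_range_zero]
    · rw [hP.finrank_truncQuot_succ hn hφ, hV, h.sum_range_succ hδ hn]

/-! ### Homogenization and the sufficiency of the numerical condition -/

/-- Setting the last of three variables to one. -/
def dehomog : MvPolynomial (Fin 3) K →ₐ[K] Polynomial (Polynomial K) :=
  aeval ![Polynomial.X, Polynomial.C Polynomial.X, 1]

theorem dehomog_mem_totalDegLT {i : ℕ} {p : MvPolynomial (Fin 3) K} (hp : p.IsHomogeneous i) :
    dehomog p ∈ totalDegLT K (i + 1) := by
  rw [isHomogeneous_eq_sum hp, map_sum]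
  refine Submodule.sum_mem _ fun d _ => ?_
  rw [map_smul]
  refine Submodule.smul_mem _ _ ?_
  obtain ⟨d, hd⟩ := d
  have h1 : dehomog (monomial d (1 : K)) =
      Polynomial.X ^ d 0 * Polynomial.C (Polynomial.X ^ d 1) := by
    simp [dehomog, aeval_monomial, Finsupp.prod_fintype, Fin.prod_univ_three]
  have hd' : d 0 + d 1 + d 2 = i := by
    rw [← hd, Finsupp.degree_eq_sum, Fin.sum_univ_three]
  have h2 : ∀ a b : ℕ, Polynomial.X ^ a * Polynomial.C (Polynomial.X ^ b) ∈
      totalDegLT K (a + b + 1) := by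
    intro a b
    induction a with
    | zero => simpa using C_X_pow_mem_totalDegLT (K := K) b
    | succ a ih =>
      rw [pow_succ', mul_assoc, show a + 1 + b + 1 = a + b + 1 + 1 by ring]
      exact X_mul_mem_totalDegLT ih
  rw [h1]
  exact totalDegLT_mono (by omega) (h2 _ _)

theorem exists_dehomog_eq {i : ℕ} {f : Polynomial (Polynomial K)} (hf : f ∈ totalDegLT K (i + 1)) :
    ∃ p : MvPolynomial (Fin 3) K, p.IsHomogeneous i ∧ dehomog p = f := by
  have hC : ∀ (i : ℕ) (p : Polynomial K), p ∈ Polynomial.degreeLT K (i + 1) →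
      ∃ q : MvPolynomial (Fin 3) K, q.IsHomogeneous i ∧ dehomog q = Polynomial.C p := by
    intro i p hp
    refine ⟨homogEval (X 2) (X 1) i p, ?_, ?_⟩
    · rw [homogEval_apply]
      refine IsHomogeneous.sum _ _ _ fun k hk => ?_
      rw [smul_eq_C_mul]
      refine IsHomogeneous.C_mul ?_ _
      rw [Finset.mem_range] at hk
      have := ((isHomogeneous_X K (2 : Fin 3)).pow (i - k)).mul
        ((isHomogeneous_X K (1 : Fin 3)).pow k)
      rwa [show 1 * (i - k) + 1 * k = i by omega] at this
    · rw [Polynomial.mem_degreeLT] at hp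
      rw [homogEval_apply]
      conv_rhs => rw [Polynomial.as_sum_range' p (i + 1) (by
        rcases eq_or_ne p 0 with rfl | h0
        · simp
        · exact (Polynomial.natDegree_lt_iff_degree_lt h0).mpr hp)]
      rw [map_sum, map_sum]
      refine Finset.sum_congr rfl fun k _ => ?_
      rw [map_smul, ← Polynomial.C_mul_X_pow_eq_monomial]
      ext
      simp [dehomog, Polynomial.coeff_C_mul, Algebra.smul_def]
  induction i generalizing f with
  | zero =>
    obtain ⟨p, hp, r, hr, rfl⟩ := exists_eq_C_add_X_mul hf
    obtain ⟨q, hq, hqp⟩ := hC 0 p hp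
    refine ⟨q, hq, ?_⟩
    have : r = 0 := by
      ext u v
      simpa using hr u v (Nat.zero_le _)
    rw [this, mul_zero, add_zero, hqp]
  | succ i ih =>
    obtain ⟨p, hp, r, hr, rfl⟩ := exists_eq_C_add_X_mul hf
    obtain ⟨q, hq, hqp⟩ := hC (i + 1) p hp
    obtain ⟨s, hs, hsr⟩ := ih hr
    refine ⟨q + X 0 * s, hq.add ?_, ?_⟩
    · rw [add_comm i 1]
      exact (isHomogeneous_X K _).mul hs
    · rw [map_add, map_mul, hqp, hsr]
      simp [dehomog]

/-- A functional on bivariate polynomials of total degree at most `j`, viewed as a functional on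
ternary forms of degree `j`. -/
def homogFunctional (φ : Polynomial (Polynomial K) →ₗ[K] K) (j : ℕ) :
    MvPolynomial (Fin 3) K →ₗ[K] K :=
  φ ∘ₗ dehomog.toLinearMap ∘ₗ homogeneousComponent j

theorem homogFunctional_of_ne (φ : Polynomial (Polynomial K) →ₗ[K] K) {j k : ℕ} (hk : k ≠ j)
    {q : MvPolynomial (Fin 3) K} (hq : q.IsHomogeneous k) : homogFunctional φ j q = 0 := by
  rw [homogFunctional, LinearMap.comp_apply, LinearMap.comp_apply, homogeneousComponent_of_mem hq,
    if_neg hk.symm, map_zero, map_zero]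

theorem homogFunctional_of_isHomogeneous (φ : Polynomial (Polynomial K) →ₗ[K] K) {j : ℕ}
    {q : MvPolynomial (Fin 3) K} (hq : q.IsHomogeneous j) :
    homogFunctional φ j q = φ (dehomog q) := by
  rw [homogFunctional, LinearMap.comp_apply, LinearMap.comp_apply, homogeneousComponent_of_mem hq,
    if_pos rfl]
  rfl

theorem IsCIPair.homogFunctional_ne_zero {φ : Polynomial (Polynomial K) →ₗ[K] K}
    {G G' : Polynomial (Polynomial K)} {n j : ℕ} (h : IsCIPair φ G G' n) (hnj : n ≤ j + 1) :
    homogFunctional φ j ≠ 0 := by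
  intro h0
  refine h.notMem fun q => ?_
  obtain ⟨z, hz, hz'⟩ := h.exists_sub_mem (Polynomial.C (Polynomial.X ^ (n - 1)) * G' * q)
  obtain ⟨p, hp, rfl⟩ := exists_dehomog_eq (totalDegLT_mono hnj hz)
  have h1 := hz' 1
  rw [mul_one, map_sub, ← homogFunctional_of_isHomogeneous φ hp, h0, LinearMap.zero_apply,
    sub_zero] at h1
  exact h1

theorem IsCIPair.hilbFn_annIdeal {φ : Polynomial (Polynomial K) →ₗ[K] K}
    {G G' : Polynomial (Polynomial K)} {n i j : ℕ} (h : IsCIPair φ G G' n) (hij : i ≤ j)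
    (hn : n ≤ j - i + 1) :
    hilbFn (annIdeal (homogFunctional φ j)) i = Module.finrank K (truncQuot φ (i + 1)) := by
  have hφ := fun k (hk : k ≠ j) (q : MvPolynomial (Fin 3) K) (hq : q.IsHomogeneous k) =>
    homogFunctional_of_ne φ hk hq
  have hij' : i + (j - i) = j := by omega
  rw [hilbFn_eq_finrank_range _ i ((annTwo φ).mkQ ∘ₗ dehomog.toLinearMap ∘ₗ
    (homogeneousSubmodule (Fin 3) K i).subtype)]
  · refine congrArg (fun S : Submodule K (Polynomial (Polynomial K) ⧸ annTwo φ) =>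
      Module.finrank K S) (le_antisymm ?_ ?_)
    · rintro _ ⟨p, rfl⟩
      exact ⟨_, dehomog_mem_totalDegLT p.2, rfl⟩
    · rintro _ ⟨f, hf, rfl⟩
      obtain ⟨p, hp, rfl⟩ := exists_dehomog_eq hf
      exact ⟨⟨p, hp⟩, rfl⟩
  · rintro ⟨p, hp⟩
    rw [mem_homogeneousSubmodule] at hp
    rw [mem_annIdeal_iff_of_isHomogeneous hφ hij' hp, LinearMap.comp_apply, Submodule.mkQ_apply,
      Submodule.Quotient.mk_eq_zero]
    have hpq : ∀ q : MvPolynomial (Fin 3) K, q.IsHomogeneous (j - i) →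
        homogFunctional φ j (p * q) = φ (dehomog p * dehomog q) := by
      intro q hq
      have hm := hp.mul hq
      rw [hij'] at hm
      rw [homogFunctional_of_isHomogeneous φ hm, map_mul]
    constructor
    · intro hm q hq
      rw [hpq q hq]
      exact hm _
    · intro hm g
      obtain ⟨g', hg', hg⟩ := h.exists_sub_mem g
      obtain ⟨q, hq, rfl⟩ := exists_dehomog_eq (totalDegLT_mono hn hg')
      have h1 := hg (dehomog p)
      have h2 := hpq q hq
      rw [hm q hq] at h2
      rw [sub_mul, map_sub, mul_comm (dehomog q), ← h2, sub_zero, mul_comm] at h1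
      exact h1

/-- An SI-sequence of codimension three is the Hilbert function of a Gorenstein algebra. -/
theorem exists_isAG_of_isOSequence {T : ℕ → ℕ} {j : ℕ} (hj : 2 ≤ j) (h0 : T 0 = 1) (h1 : T 1 = 3)
    (hsym : ∀ i ≤ j, T (j - i) = T i) (hvan : ∀ i, j < i → T i = 0)
    (hT : IsOSequence K (fun i =>
      if i = 0 then 1 else if 2 * i ≤ j then (T i : ℤ) - (T (i - 1) : ℤ) else 0)) :
    ∃ I : Ideal (MvPolynomial (Fin 3) K), IsAG I ∧ ∀ i, hilbFn I i = T i := by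
  obtain ⟨m, I₀, -, -, hδ⟩ := hT
  dsimp only at hδ
  set δ := hilbFn I₀
  have hδ2 : δ 1 = 2 := by
    have := hδ 1
    rw [if_neg one_ne_zero, if_pos (by omega), Nat.sub_self, h0, h1] at this
    push_cast at this
    omega
  have hO : IsOSeqTwo δ := isOSeqTwo_hilbFn hδ2
  have hδ0 : δ 0 = 1 := by
    have := hδ 0
    rw [if_pos rfl] at this
    omega
  have hδz : ∀ i, j < 2 * i → δ i = 0 := by
    intro i hi
    have := hδ i
    rw [if_neg (by omega), if_neg (by omega)] at this
    omega
  have hsum : ∀ i, 2 * i ≤ j → ∑ k ∈ Finset.range (i + 1), δ k = T i := by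
    intro i
    induction i with
    | zero => simp [hδ0, h0]
    | succ i ih =>
      intro hi
      rw [Finset.sum_range_succ, ih (by omega)]
      have := hδ (i + 1)
      rw [if_neg (by omega), if_pos hi, Nat.add_sub_cancel] at this
      omega
  obtain ⟨n, hn⟩ := hO.exists_pos_iff_lt ⟨j, hδz j (by omega)⟩
  have hn1 : 1 ≤ n := (hn 0).mp (by omega)
  have hnj : 2 * (n - 1) ≤ j := by
    by_contra! hc
    have := hδz _ hc
    have := (hn (n - 1)).mpr (by omega)
    omega
  obtain ⟨φ, G, G', hP, hrank⟩ := exists_isCIPair (K := K) hn1 hO hn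
  have hφ := fun k (hk : k ≠ j) (q : MvPolynomial (Fin 3) K) (hq : q.IsHomogeneous k) =>
    homogFunctional_of_ne φ hk hq
  set ψ := homogFunctional φ j
  have hlow : ∀ i, 2 * i ≤ j → hilbFn (annIdeal ψ) i = T i := by
    intro i hi
    rw [hP.hilbFn_annIdeal (by omega) (by omega), hrank, hsum i hi]
  refine ⟨annIdeal ψ, isAG_annIdeal hφ (hP.homogFunctional_ne_zero (by omega)), fun i => ?_⟩
  rcases le_or_gt (2 * i) j with hi | hi
  · exact hlow i hi
  rcases le_or_gt i j with hij | hij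
  · rw [← hsym i hij, ← hlow (j - i) (by omega),
      hilbFn_eq_rank_catMatrix _ ψ i (j - i) fun p hp =>
        mem_annIdeal_iff_of_isHomogeneous hφ (by omega) hp,
      hilbFn_eq_rank_catMatrix _ ψ (j - i) i fun p hp =>
        mem_annIdeal_iff_of_isHomogeneous hφ (by omega) hp, rank_catMatrix_comm]
  · rw [hvan i hij, hilbFn_eq_finrank_range _ i (0 : homogeneousSubmodule (Fin 3) K i →ₗ[K] K),
      LinearMap.range_zero, finrank_bot]
    exact fun p => ⟨fun _ => mem_annIdeal_of_lt hφ hij p.2, fun _ => rfl⟩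

/-- Stanley: a symmetric sequence `T = (1, 3, t_2, …, 3, 1)` of socle
degree `j` is the Hilbert function of a codimension three standard graded Artinian
Gorenstein algebra iff its first-half difference sequence
`ΔT = (1, t_1 - 1, …, t_{⌊j/2⌋} - t_{⌊j/2⌋-1})` is an O-sequence (i.e. `T` is an
SI-sequence). -/
theorem stmt2 (T : ℕ → ℕ) (j : ℕ) (hj : 2 ≤ j)
    (h0 : T 0 = 1) (h1 : T 1 = 3)
    (hsym : ∀ i ≤ j, T (j - i) = T i) (hvan : ∀ i, j < i → T i = 0) :
    (∃ I : Ideal (MvPolynomial (Fin 3) K), IsAG I ∧ ∀ i, hilbFn I i = T i) ↔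
    IsOSequence K (fun i =>
      if i = 0 then 1 else if 2 * i ≤ j then (T i : ℤ) - (T (i - 1) : ℤ) else 0) := by
  exact ⟨fun ⟨_, hI, hT⟩ => hI.isOSequence h0 hsym hvan hT,
    exists_isAG_of_isOSequence hj h0 h1 hsym hvan⟩
end
end
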